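/- Let 1 < p < ∞ with N > p, and let u be a nonnegative C^1 weak solution of Δ_p u = 0 on all of ℝ^N. Then u is constant. -/

import Mathlib

open MeasureTheory
open scoped RealInnerProductSpace

open MeasureTheory
open scoped RealInnerProductSpace

namespace PLiouville

open Filter Topology Set Metric

abbrev E (N : ℕ) := EuclideanSpace ℝ (Fin N)

variable {N : ℕ}

/-! ### Gradients -/

lemma grad_hasFDerivAt {f : E N → ℝ} {x : E N} (hf : DifferentiableAt ℝ f x) :
    HasFDerivAt f (InnerProductSpace.toDual ℝ (E N) (gradient f x)) x :=
  hf.hasGradientAt.hasFDerivAt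

lemma grad_mul {f g : E N → ℝ} {x : E N} (hf : DifferentiableAt ℝ f x)
    (hg : DifferentiableAt ℝ g x) :
    gradient (fun y => f y * g y) x = f x • gradient g x + g x • gradient f x := by
  apply HasGradientAt.gradient
  rw [hasGradientAt_iff_hasFDerivAt]
  have := (grad_hasFDerivAt hf).mul (grad_hasFDerivAt hg)
  rw [map_add, map_smul, map_smul]
  exact this

lemma grad_comp {f : E N → ℝ} {h : ℝ → ℝ} {h' : ℝ} {x : E N} (hf : DifferentiableAt ℝ f x)
    (hh : HasDerivAt h h' (f x)) :
    gradient (fun y => h (f y)) x = h' • gradient f x := by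
  apply HasGradientAt.gradient
  rw [hasGradientAt_iff_hasFDerivAt]
  have := hh.comp_hasFDerivAt x (grad_hasFDerivAt hf)
  simpa [Function.comp_def] using this

lemma norm_grad (f : E N → ℝ) (x : E N) : ‖gradient f x‖ = ‖fderiv ℝ f x‖ := by
  rw [← toDual_gradient]; exact ((InnerProductSpace.toDual ℝ (E N)).norm_map _).symm

lemma continuous_grad {f : E N → ℝ} (hf : ContDiff ℝ 1 f) : Continuous (gradient f) := by
  have := hf.continuous_fderiv one_ne_zero
  unfold gradient
  fun_prop

lemma hcs_grad {f : E N → ℝ} (hf : HasCompactSupport f) : HasCompactSupport (gradient f) := by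
  have := hf.fderiv (𝕜 := ℝ)
  exact this.comp_left (g := (InnerProductSpace.toDual ℝ (E N)).symm) (by simp)

lemma diff_of {f : E N → ℝ} (hf : ContDiff ℝ 1 f) (x : E N) : DifferentiableAt ℝ f x :=
  (hf.differentiable one_ne_zero) x

/-! ### The vector field -/

noncomputable def pA (p : ℝ) (v : E N) : E N := ‖v‖ ^ (p - 2) • v

lemma norm_pA {p : ℝ} (hp : 1 < p) (v : E N) : ‖pA p v‖ = ‖v‖ ^ (p - 1) := by
  unfold pA
  rcases eq_or_ne v 0 with rfl | hv
  · simp [Real.zero_rpow (by linarith : p - 1 ≠ 0)]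
  · have : 0 < ‖v‖ := norm_pos_iff.2 hv
    rw [norm_smul, Real.norm_of_nonneg (by positivity)]
    nth_rewrite 2 [← Real.rpow_one ‖v‖]
    rw [← Real.rpow_add this]; congr 1; ring

lemma inner_pA {p : ℝ} (hp : 1 < p) (v : E N) : ⟪pA p v, v⟫ = ‖v‖ ^ p := by
  unfold pA
  rcases eq_or_ne v 0 with rfl | hv
  · simp [Real.zero_rpow (by linarith : p ≠ 0)]
  · have : 0 < ‖v‖ := norm_pos_iff.2 hv
    rw [real_inner_smul_left, real_inner_self_eq_norm_sq, ← Real.rpow_natCast,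
      ← Real.rpow_add this]; congr 1; push_cast; ring

lemma continuous_pA {p : ℝ} (hp : 1 < p) : Continuous (pA p : E N → E N) := by
  rw [continuous_iff_continuousAt]
  intro v
  rcases eq_or_ne v 0 with rfl | hv
  · have h0 : pA p (0 : E N) = 0 := by simp [pA]
    rw [ContinuousAt, h0, tendsto_zero_iff_norm_tendsto_zero]
    simp_rw [norm_pA hp]
    have : Continuous (fun v : E N => ‖v‖ ^ (p - 1)) :=
      continuous_norm.rpow_const (fun _ => Or.inr (by linarith))
    have := this.tendsto 0
    simpa [Real.zero_rpow (by linarith : p - 1 ≠ 0)] using this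
  · unfold pA
    exact (continuousAt_id.norm.rpow_const (Or.inl (by simpa using hv))).smul continuousAt_id

lemma pA_smul {p : ℝ} (t : ℝ) (ht : 0 < t) (v : E N) :
    pA p (t • v) = t ^ (p - 1) • pA p v := by
  unfold pA
  rw [norm_smul, Real.norm_of_nonneg ht.le, Real.mul_rpow ht.le (norm_nonneg _), smul_smul,
    smul_smul]
  congr 1
  have : t ^ (p - 1) = t ^ (p - 2) * t := by
    nth_rewrite 3 [← Real.rpow_one t]
    rw [← Real.rpow_add ht]; congr 1; ring
  rw [this]; ring

lemma pA_neg {p : ℝ} (v : E N) : pA p (-v) = - pA p v := by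
  simp [pA]

/-! ### Solutions -/

structure IsSol (p : ℝ) (u : E N → ℝ) : Prop where
  cd : ContDiff ℝ 1 u
  pos : ∀ x, 0 < u x
  weak : ∀ φ : E N → ℝ, ContDiff ℝ 1 φ → HasCompactSupport φ →
    ∫ x, ⟪pA p (gradient u x), gradient φ x⟫ = 0

/-- Mollification. -/
lemma weak_C1 (A : E N → E N) (hA : Continuous A)
    (h : ∀ φ : E N → ℝ, ContDiff ℝ (⊤ : ℕ∞) φ → HasCompactSupport φ →
      ∫ x, ⟪A x, gradient φ x⟫ = 0)
    (ψ : E N → ℝ) (hψ : ContDiff ℝ 1 ψ) (hcψ : HasCompactSupport ψ) :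
    ∫ x, ⟪A x, gradient ψ x⟫ = 0 := by
  let b : ℕ → ContDiffBump (0 : E N) := fun n =>
    ⟨1 / (2 * ((n : ℝ) + 1)), 1 / ((n : ℝ) + 1), by positivity, by
      apply one_div_lt_one_div_of_lt <;> nlinarith [(Nat.cast_nonneg n : (0 : ℝ) ≤ n)]⟩
  have hb : Tendsto (fun n => (b n).rOut) atTop (𝓝 0) := tendsto_one_div_add_atTop_nhds_zero_nat
  let f : ℕ → E N → ℝ := fun n =>
    MeasureTheory.convolution ((b n).normed volume) ψ (ContinuousLinearMap.lsmul ℝ ℝ) volume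
  have hfs : ∀ n, ContDiff ℝ (⊤ : ℕ∞) (f n) := fun n =>
    (b n).hasCompactSupport_normed.contDiff_convolution_left _ ((b n).contDiff_normed)
      hψ.continuous.locallyIntegrable
  have hfc : ∀ n, HasCompactSupport (f n) := fun n =>
    HasCompactSupport.convolution _ (b n).hasCompactSupport_normed hcψ
  have hfd : ∀ n x, fderiv ℝ (f n) x =
      MeasureTheory.convolution ((b n).normed volume) (fderiv ℝ ψ)
        (ContinuousLinearMap.lsmul ℝ ℝ) volume x := by
    intro n x
    have := (hcψ.hasFDerivAt_convolution_right (ContinuousLinearMap.lsmul ℝ ℝ)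
      (μ := volume) (f := (b n).normed volume)
      ((b n).continuous_normed.locallyIntegrable) hψ x).fderiv
    rw [this]
    rfl
  have hlim : ∀ x, Tendsto (fun n => fderiv ℝ (f n) x) atTop (𝓝 (fderiv ℝ ψ x)) := by
    intro x
    simp_rw [hfd]
    exact ContDiffBump.convolution_tendsto_right_of_continuous hb
      (hψ.continuous_fderiv one_ne_zero) x
  obtain ⟨C, hC⟩ : ∃ C, ∀ x, ‖fderiv ℝ ψ x‖ ≤ C :=
    (hcψ.fderiv (𝕜 := ℝ)).exists_bound_of_continuous (hψ.continuous_fderiv one_ne_zero)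
  have hC0 : 0 ≤ C := (norm_nonneg _).trans (hC 0)
  have hbd : ∀ n x, ‖fderiv ℝ (f n) x‖ ≤ 3 * C := by
    intro n x
    have := (b n).dist_normed_convolution_le (μ := volume) (g := fderiv ℝ ψ) (x₀ := x)
      (ε := 2 * C) (hψ.continuous_fderiv one_ne_zero).aestronglyMeasurable
      (fun y _ => by
        rw [dist_eq_norm]
        linarith [norm_sub_le (fderiv ℝ ψ y) (fderiv ℝ ψ x), hC x, hC y])
    rw [← hfd, dist_eq_norm] at this
    linarith [norm_sub_norm_le (fderiv ℝ (f n) x) (fderiv ℝ ψ x), hC x]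
  obtain ⟨R, hR⟩ := hcψ.isCompact.isBounded.subset_closedBall (0 : E N)
  have hsupp : ∀ n x, x ∉ closedBall (0 : E N) (R + 1) → fderiv ℝ (f n) x = 0 := by
    intro n x hx
    rw [hfd]
    have hd := (b n).dist_normed_convolution_le (μ := volume) (g := fderiv ℝ ψ) (x₀ := x)
      (ε := 0) (hψ.continuous_fderiv one_ne_zero).aestronglyMeasurable
      (fun y hy => by
        have hz : ∀ z, z ∉ closedBall (0 : E N) R → fderiv ℝ ψ z = 0 := by
          intro z hz
          by_contra hne
          exact hz (hR (support_fderiv_subset ℝ hne))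
        have hbn : (b n).rOut ≤ 1 := by
          change 1 / ((n : ℝ) + 1) ≤ 1
          rw [div_le_one (by positivity)]; linarith [(Nat.cast_nonneg n : (0 : ℝ) ≤ n)]
        simp only [mem_closedBall, dist_zero_right, not_le, mem_ball] at hx hy hz
        have : ‖x‖ ≤ ‖y‖ + dist y x := by
          rw [dist_eq_norm]; linarith [norm_sub_norm_le x y, norm_sub_rev x y]
        rw [hz x (by linarith), hz y (by linarith)]; simp)
    have hz : fderiv ℝ ψ x = 0 := by
      by_contra hne
      have := hR (support_fderiv_subset ℝ hne)
      simp only [mem_closedBall, dist_zero_right, not_le] at hx this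
      linarith
    rw [hz, dist_zero_right] at hd
    exact norm_le_zero_iff.1 hd
  have key : Tendsto (fun n => ∫ x, ⟪A x, gradient (f n) x⟫) atTop
      (𝓝 (∫ x, ⟪A x, gradient ψ x⟫)) := by
    apply tendsto_integral_of_dominated_convergence
      (fun x => (closedBall (0 : E N) (R + 1)).indicator (fun x => ‖A x‖ * (3 * C)) x)
    · intro n
      exact (hA.inner (continuous_grad ((hfs n).of_le (by
        exact_mod_cast le_top)))).aestronglyMeasurable
    · rw [integrable_indicator_iff measurableSet_closedBall]
      exact (by fun_prop : Continuous fun x => ‖A x‖ * (3 * C)).continuousOn.integrableOn_compact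
        (isCompact_closedBall _ _)
    · intro n
      filter_upwards with x
      by_cases hx : x ∈ closedBall (0 : E N) (R + 1)
      · rw [indicator_of_mem hx]
        refine (norm_inner_le_norm _ _).trans ?_
        gcongr
        rw [norm_grad]; exact hbd n x
      · rw [indicator_of_notMem hx]
        have : gradient (f n) x = 0 := by
          rw [← norm_eq_zero, norm_grad, hsupp n x hx, norm_zero]
        simp [this]
    · filter_upwards with x
      have : Tendsto (fun n => gradient (f n) x) atTop (𝓝 (gradient ψ x)) := by
        unfold gradient
        exact ((InnerProductSpace.toDual ℝ (E N)).symm.continuous.tendsto _).comp (hlim x)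
      exact tendsto_const_nhds.inner this
  have h0 : (fun n => ∫ x, ⟪A x, gradient (f n) x⟫) = fun _ => 0 := by
    funext n; exact h _ (hfs n) (hfc n)
  rw [h0] at key
  exact tendsto_nhds_unique key tendsto_const_nhds

lemma grad_affine {f : E N → ℝ} (x₀ : E N) (r : ℝ) (x : E N)
    (hf : DifferentiableAt ℝ f (x₀ + r • x)) :
    gradient (fun y => f (x₀ + r • y)) x = r • gradient f (x₀ + r • x) := by
  apply HasGradientAt.gradient
  rw [hasGradientAt_iff_hasFDerivAt]
  have h1 : HasFDerivAt (fun y : E N => x₀ + r • y) (r • ContinuousLinearMap.id ℝ (E N)) x :=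
    ((hasFDerivAt_id x).const_smul r).const_add x₀
  have := (grad_hasFDerivAt hf).comp x h1
  have e : (InnerProductSpace.toDual ℝ (E N)) (r • gradient f (x₀ + r • x)) =
    ((InnerProductSpace.toDual ℝ (E N)) (gradient f (x₀ + r • x))).comp
      (r • ContinuousLinearMap.id ℝ (E N)) := by
    ext v
    simp
  rw [e]
  exact this

lemma integral_affine (g : E N → ℝ) (x₀ : E N) (r : ℝ) :
    ∫ x, g (x₀ + r • x) = |(r ^ N)⁻¹| * ∫ x, g x := by
  have := Measure.integral_comp_smul (volume : Measure (E N)) (fun x => g (x₀ + x)) r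
  rw [this, integral_add_left_eq_self]
  simp

lemma IsSol.affine {p : ℝ} {u : E N → ℝ} (hu : IsSol p u) (x₀ : E N) {r k : ℝ} (hr : 0 < r)
    (hk : 0 < k) : IsSol p (fun x => k * u (x₀ + r • x)) where
  cd := by have := hu.cd; fun_prop
  pos x := mul_pos hk (hu.pos _)
  weak φ hφ hcφ := by
    have hg : ∀ x, gradient (fun x => k * u (x₀ + r • x)) x =
        (k * r) • gradient u (x₀ + r • x) := by
      intro x
      have h1 := grad_affine x₀ r x (diff_of hu.cd _)
      have h2 : DifferentiableAt ℝ (fun x => u (x₀ + r • x)) x := by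
        apply diff_of; have := hu.cd; fun_prop
      have := grad_comp (h := fun t => k * t) h2 (by simpa using (hasDerivAt_id _).const_mul k)
      rw [this, h1, smul_smul]
    let φ' : E N → ℝ := fun y => φ (- (r⁻¹ • x₀) + r⁻¹ • y)
    have hφ' : ContDiff ℝ 1 φ' := by fun_prop
    have hcφ' : HasCompactSupport φ' := by
      have hcl : IsClosedEmbedding (fun y : E N => - (r⁻¹ • x₀) + r⁻¹ • y) :=
        ((Homeomorph.smulOfNeZero r⁻¹ (inv_pos.2 hr).ne').trans
          (Homeomorph.addLeft (-(r⁻¹ • x₀)))).isClosedEmbedding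
      exact hcφ.comp_isClosedEmbedding hcl
    have e := hu.weak φ' hφ' hcφ'
    have e2 := integral_affine (fun y => ⟪pA p (gradient u y), gradient φ' y⟫) x₀ r
    rw [e, mul_zero] at e2
    have : ∀ x, ⟪pA p (gradient (fun x => k * u (x₀ + r • x)) x), gradient φ x⟫ =
        ((k * r) ^ (p - 1) * r) * ⟪pA p (gradient u (x₀ + r • x)), gradient φ' (x₀ + r • x)⟫ := by
      intro x
      rw [hg, pA_smul _ (by positivity), grad_affine _ _ _ (diff_of hφ _)]
      have : -(r⁻¹ • x₀) + r⁻¹ • (x₀ + r • x) = x := by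
        rw [smul_add, smul_smul, inv_mul_cancel₀ hr.ne']; simp
      rw [this, real_inner_smul_left, real_inner_smul_right]
      field_simp
    simp_rw [this]
    rw [integral_const_mul, e2, mul_zero]

/-! ### Subsolutions and energy estimates -/

structure IsSub (p : ℝ) (w : E N → ℝ) : Prop where
  cd : ContDiff ℝ 1 w
  pos : ∀ x, 0 < w x
  weak : ∀ ψ : E N → ℝ, ContDiff ℝ 1 ψ → HasCompactSupport ψ → (∀ x, 0 ≤ ψ x) →
    ∫ x, ⟪pA p (gradient w x), gradient ψ x⟫ ≤ 0

lemma integrable_inner_grad {A : E N → E N} (hA : Continuous A) {ψ : E N → ℝ}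
    (hψ : ContDiff ℝ 1 ψ) (hc : HasCompactSupport ψ) :
    Integrable (fun x => ⟪A x, gradient ψ x⟫) := by
  apply Continuous.integrable_of_hasCompactSupport (hA.inner (continuous_grad hψ))
  exact (hcs_grad hc).mono (fun x hx => by
    simp only [Function.mem_support] at hx ⊢
    contrapose! hx; simp [hx])

lemma IsSol.isSub {p : ℝ} {u : E N → ℝ} (hu : IsSol p u) : IsSub p u :=
  ⟨hu.cd, hu.pos, fun ψ h1 h2 _ => (hu.weak ψ h1 h2).le⟩

lemma IsSol.log_grad {p : ℝ} {u : E N → ℝ} (hu : IsSol p u) (x : E N) :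
    gradient (fun x => Real.log (u x + 1) - Real.log (u x)) x =
      -((u x * (u x + 1))⁻¹ • gradient u x) := by
  have h0 := hu.pos x
  have hd : HasDerivAt (fun t => Real.log (t + 1) - Real.log t) (-(u x * (u x + 1))⁻¹) (u x) := by
    have h1 := ((hasDerivAt_id' (u x)).add_const 1).log (by simp; positivity)
    have h2 := (hasDerivAt_id' (u x)).log (by simp; positivity)
    refine (h1.sub h2).congr_deriv ?_
    field_simp
    ring
  rw [grad_comp (diff_of hu.cd x) hd, neg_smul]

lemma IsSol.log_isSub {p : ℝ} (hp : 1 < p) {u : E N → ℝ} (hu : IsSol p u) :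
    IsSub p (fun x => Real.log (u x + 1) - Real.log (u x)) := by
  have hcd : ContDiff ℝ 1 (fun x => Real.log (u x + 1) - Real.log (u x)) := by
    apply ContDiff.sub
    · exact (hu.cd.add contDiff_const).log (fun x => by have := hu.pos x; positivity)
    · exact hu.cd.log (fun x => (hu.pos x).ne')
  refine ⟨hcd, fun x => ?_, fun ψ hψ hc h0 => ?_⟩
  · have := hu.pos x
    exact sub_pos.2 (Real.log_lt_log this (by linarith))
  · let q : E N → ℝ := fun x => (u x * (u x + 1)) ^ (1 - p)
    have hq : ContDiff ℝ 1 q := by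
      apply ContDiff.rpow_const_of_ne
      · exact hu.cd.mul (hu.cd.add contDiff_const)
      · intro x; have := hu.pos x; positivity
    have hΨ : ContDiff ℝ 1 (fun x => ψ x * q x) := hψ.mul hq
    have hcΨ : HasCompactSupport (fun x => ψ x * q x) := hc.mul_right
    have e := hu.weak _ hΨ hcΨ
    have hle : ∫ x, ⟪pA p (gradient (fun x => Real.log (u x + 1) - Real.log (u x)) x),
        gradient ψ x⟫ ≤ ∫ x, -⟪pA p (gradient u x), gradient (fun x => ψ x * q x) x⟫ := by
      apply integral_mono
      · exact integrable_inner_grad ((continuous_pA hp).comp (continuous_grad hcd)) hψ hc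
      · exact (integrable_inner_grad ((continuous_pA hp).comp (continuous_grad hu.cd)) hΨ hcΨ).neg
      · intro x
        have hx := hu.pos x
        have hm : 0 < u x * (u x + 1) := by positivity
        have hgq : gradient q x = ((2 * u x + 1) * (1 - p) * (u x * (u x + 1)) ^ (1 - p - 1)) •
            gradient u x := by
          apply grad_comp (h := fun t => (t * (t + 1)) ^ (1 - p)) (diff_of hu.cd x)
          have h1 : HasDerivAt (fun t : ℝ => t * (t + 1)) (2 * u x + 1) (u x) := by
            refine ((hasDerivAt_id' (u x)).mul ((hasDerivAt_id' (u x)).add_const 1)).congr_deriv ?_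
            ring
          exact h1.rpow_const (Or.inl hm.ne')
        have e1 : pA p (gradient (fun x => Real.log (u x + 1) - Real.log (u x)) x) =
            -(q x • pA p (gradient u x)) := by
          rw [hu.log_grad, pA_neg, pA_smul _ (by positivity)]
          congr 2
          rw [Real.inv_rpow hm.le, ← Real.rpow_neg hm.le]
          simp [q]
        simp only
        rw [e1, grad_mul (diff_of hψ x) (diff_of hq x), hgq, inner_neg_left, inner_add_right,
          real_inner_smul_left, real_inner_smul_right, real_inner_smul_right,
          real_inner_smul_right, inner_pA hp]
        have : 0 ≤ ψ x * ((2 * u x + 1) * (p - 1) * (u x * (u x + 1)) ^ (1 - p - 1) *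
          ‖gradient u x‖ ^ p) := by
          have := h0 x
          have : 0 ≤ p - 1 := by linarith
          positivity
        nlinarith
    rw [integral_neg, e, neg_zero] at hle
    exact hle

lemma young {p a b : ℝ} (hp : 1 < p) (ha : 0 ≤ a) (hb : 0 ≤ b) :
    p * a ^ (p - 1) * b ≤ a ^ p / 2 + (2 * p) ^ p * b ^ p := by
  have hs : ∀ t : ℝ, 0 ≤ t → t ^ p = t ^ (p - 1) * t := by
    intro t ht
    nth_rewrite 3 [← Real.rpow_one t]
    rw [← Real.rpow_add_of_nonneg ht (by linarith) (by norm_num)]; congr 1; ring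
  rcases le_total (2 * p * b) a with h | h
  · have h1 : 0 ≤ a ^ (p - 1) := by positivity
    have h2 : 0 ≤ (2 * p) ^ p * b ^ p := by positivity
    rw [hs a ha]
    nlinarith
  · have h1 : a ^ (p - 1) ≤ (2 * p * b) ^ (p - 1) :=
      Real.rpow_le_rpow ha h (by linarith)
    have h2 : 0 ≤ a ^ p := by positivity
    rw [← Real.mul_rpow (by positivity) hb, hs (2 * p * b) (by positivity)]
    have h3 : 0 ≤ (2 * p * b) ^ (p - 1) := by positivity
    have h4 : 0 ≤ p * b := by positivity
    nlinarith [mul_le_mul_of_nonneg_right h1 h4]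

lemma rpow_p_sub {p t : ℝ} (ht : 0 ≤ t) (hp : 1 < p) : t ^ p = t ^ (p - 1) * t := by
  nth_rewrite 3 [← Real.rpow_one t]
  rw [← Real.rpow_add_of_nonneg ht (by linarith) (by norm_num)]; congr 1; ring

lemma contDiff_rpow_p {p : ℝ} (hp : 1 < p) {φ : E N → ℝ} (hφ : ContDiff ℝ 1 φ) :
    ContDiff ℝ 1 (fun x => φ x ^ p) := by
  have := ContDiff.rpow_const_of_le (m := 1) (p := p) hφ (by simpa using hp.le)
  exact_mod_cast this

lemma hcs_rpow {p : ℝ} (hp : 1 < p) {φ : E N → ℝ} (hφ : HasCompactSupport φ) :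
    HasCompactSupport (fun x => φ x ^ p) :=
  hφ.comp_left (g := fun t : ℝ => t ^ p) (Real.zero_rpow (by linarith))

lemma grad_rpow_p {p : ℝ} (hp : 1 < p) {φ : E N → ℝ} (hφ : ContDiff ℝ 1 φ) (x : E N) :
    gradient (fun x => φ x ^ p) x = (p * φ x ^ (p - 1)) • gradient φ x :=
  grad_comp (h := fun t => t ^ p) (diff_of hφ x) (Real.hasDerivAt_rpow_const (Or.inr hp.le))

lemma integrable_cc {f : E N → ℝ} {φ : E N → ℝ} (hf : Continuous f) (hc : HasCompactSupport φ)
    (h : ∀ x, φ x = 0 → gradient φ x = 0 → f x = 0) : Integrable f := by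
  apply hf.integrable_of_hasCompactSupport
  apply HasCompactSupport.intro (K := tsupport φ) hc.isCompact
  intro x hx
  apply h x (image_eq_zero_of_notMem_tsupport hx)
  rw [← norm_eq_zero, norm_grad, norm_eq_zero]
  by_contra hne
  exact hx (support_fderiv_subset ℝ hne)

/-- Caccioppoli inequality for powers of subsolutions. -/
lemma IsSub.caccioppoli {p : ℝ} (hp : 1 < p) {w : E N → ℝ} (hw : IsSub p w) {φ : E N → ℝ}
    (hφ : ContDiff ℝ 1 φ) (hc : HasCompactSupport φ) (h0 : ∀ x, 0 ≤ φ x) {s : ℝ} (hs : 1 ≤ s) :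
    ∫ x, (φ x * (w x ^ (s - 1) * ‖gradient w x‖)) ^ p ≤
      2 * (2 * p) ^ p * ∫ x, (w x ^ s * ‖gradient φ x‖) ^ p := by
  have hcw := hw.cd.continuous
  have hcgw := continuous_grad hw.cd
  have hcφ := hφ.continuous
  have hcgφ := continuous_grad hφ
  have hp0 : 0 < p := by linarith
  have hws : ∀ t : ℝ, ContDiff ℝ 1 (fun x => w x ^ t) := fun t =>
    hw.cd.rpow_const_of_ne (fun x => (hw.pos x).ne')
  set β : ℝ := p * (s - 1) + 1 with hβ
  have hβ1 : 1 ≤ β := by nlinarith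
  have hψ : ContDiff ℝ 1 (fun x => w x ^ β * φ x ^ p) := (hws β).mul (contDiff_rpow_p hp hφ)
  have hcψ : HasCompactSupport (fun x => w x ^ β * φ x ^ p) := (hcs_rpow hp hc).mul_left
  have e := hw.weak _ hψ hcψ (fun x => by have := hw.pos x; have := h0 x; positivity)
  have ia : Integrable (fun x => (φ x * (w x ^ (s - 1) * ‖gradient w x‖)) ^ p) := by
    apply integrable_cc _ hc
    · intro x h _; simp [h, Real.zero_rpow hp0.ne']
    · exact (hcφ.mul ((hws _).continuous.mul hcgw.norm)).rpow_const (fun _ => Or.inr hp0.le)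
  have ib : Integrable (fun x => (w x ^ s * ‖gradient φ x‖) ^ p) := by
    apply integrable_cc _ hc
    · intro x _ h; simp [h, Real.zero_rpow hp0.ne']
    · exact ((hws _).continuous.mul hcgφ.norm).rpow_const (fun _ => Or.inr hp0.le)
  have hle : ∫ x, ((φ x * (w x ^ (s - 1) * ‖gradient w x‖)) ^ p / 2 -
      (2 * p) ^ p * (w x ^ s * ‖gradient φ x‖) ^ p) ≤
      ∫ x, ⟪pA p (gradient w x), gradient (fun x => w x ^ β * φ x ^ p) x⟫ := by
    apply integral_mono
    · exact (ia.div_const 2).sub (ib.const_mul _)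
    · exact integrable_inner_grad ((continuous_pA hp).comp hcgw) hψ hcψ
    intro x
    have hx := hw.pos x
    have hφx := h0 x
    simp only
    have hy := young hp (a := φ x * (w x ^ (s - 1) * ‖gradient w x‖))
      (b := w x ^ s * ‖gradient φ x‖) (by positivity) (by positivity)
    rw [grad_mul (diff_of (hws β) x) (diff_of (contDiff_rpow_p hp hφ) x), grad_rpow_p hp hφ,
      grad_comp (h := fun t => t ^ β) (diff_of hw.cd x)
        (Real.hasDerivAt_rpow_const (Or.inl hx.ne')), inner_add_right,
      real_inner_smul_right, real_inner_smul_right, real_inner_smul_right,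
      real_inner_smul_right, inner_pA hp]
    have hcs : -(‖gradient w x‖ ^ (p - 1) * ‖gradient φ x‖) ≤
        ⟪pA p (gradient w x), gradient φ x⟫ := by
      rw [← norm_pA hp]
      exact (neg_le_of_abs_le (abs_real_inner_le_norm _ _))
    have ea : (φ x * (w x ^ (s - 1) * ‖gradient w x‖)) ^ p =
        φ x ^ p * (w x ^ (β - 1) * ‖gradient w x‖ ^ p) := by
      rw [Real.mul_rpow hφx (by positivity), Real.mul_rpow (by positivity) (by positivity),
        ← Real.rpow_mul hx.le]
      congr 3; rw [hβ]; ring_nf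
    have eab : p * (φ x * (w x ^ (s - 1) * ‖gradient w x‖)) ^ (p - 1) *
        (w x ^ s * ‖gradient φ x‖) =
        w x ^ β * (p * φ x ^ (p - 1) * (‖gradient w x‖ ^ (p - 1) * ‖gradient φ x‖)) := by
      rw [Real.mul_rpow hφx (by positivity), Real.mul_rpow (by positivity) (by positivity),
        ← Real.rpow_mul hx.le]
      have : w x ^ β = w x ^ ((s - 1) * (p - 1)) * w x ^ s := by
        rw [← Real.rpow_add hx]; congr 1; rw [hβ]; ring
      rw [this]; ring
    have h5 : 0 ≤ w x ^ β * (p * φ x ^ (p - 1)) := by positivity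
    have h6 : 0 ≤ φ x ^ p * (w x ^ (β - 1) * ‖gradient w x‖ ^ p) := by positivity
    rw [ea] at hy ⊢
    rw [eab] at hy
    nlinarith [mul_le_mul_of_nonneg_left hcs h5, mul_le_mul_of_nonneg_right hβ1 h6]
  rw [integral_sub (ia.div_const 2) (ib.const_mul _), integral_div, integral_const_mul] at hle
  linarith

/-- Logarithmic Caccioppoli inequality. -/
lemma IsSol.log_caccioppoli {p : ℝ} (hp : 1 < p) {u : E N → ℝ} (hu : IsSol p u) {φ : E N → ℝ}
    (hφ : ContDiff ℝ 1 φ) (hc : HasCompactSupport φ) (h0 : ∀ x, 0 ≤ φ x) :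
    ∫ x, (φ x * ((u x)⁻¹ * ‖gradient u x‖)) ^ p ≤
      2 * (2 * p) ^ p * ∫ x, ((p - 1)⁻¹ * ‖gradient φ x‖) ^ p := by
  have hcw := hu.cd.continuous
  have hcgw := continuous_grad hu.cd
  have hcφ := hφ.continuous
  have hcgφ := continuous_grad hφ
  have hp0 : 0 < p := by linarith
  have hp1 : 0 < p - 1 := by linarith
  have hws : ∀ t : ℝ, ContDiff ℝ 1 (fun x => u x ^ t) := fun t =>
    hu.cd.rpow_const_of_ne (fun x => (hu.pos x).ne')
  have hψ : ContDiff ℝ 1 (fun x => u x ^ (1 - p) * φ x ^ p) :=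
    (hws (1 - p)).mul (contDiff_rpow_p hp hφ)
  have hcψ : HasCompactSupport (fun x => u x ^ (1 - p) * φ x ^ p) := (hcs_rpow hp hc).mul_left
  have e := hu.weak _ hψ hcψ
  have ia : Integrable (fun x => (φ x * ((u x)⁻¹ * ‖gradient u x‖)) ^ p) := by
    apply integrable_cc _ hc
    · intro x h _; simp [h, Real.zero_rpow hp0.ne']
    · exact (hcφ.mul ((hcw.inv₀ (fun x => (hu.pos x).ne')).mul hcgw.norm)).rpow_const
        (fun _ => Or.inr hp0.le)
  have ib : Integrable (fun x => ((p - 1)⁻¹ * ‖gradient φ x‖) ^ p) := by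
    apply integrable_cc _ hc
    · intro x _ h; simp [h, Real.zero_rpow hp0.ne']
    · exact (continuous_const.mul hcgφ.norm).rpow_const (fun _ => Or.inr hp0.le)
  have hle : ∫ x, ((φ x * ((u x)⁻¹ * ‖gradient u x‖)) ^ p / 2 -
      (2 * p) ^ p * ((p - 1)⁻¹ * ‖gradient φ x‖) ^ p) ≤
      ∫ x, -(p - 1)⁻¹ * ⟪pA p (gradient u x), gradient (fun x => u x ^ (1 - p) * φ x ^ p) x⟫ := by
    apply integral_mono
    · exact (ia.div_const 2).sub (ib.const_mul _)
    · exact (integrable_inner_grad ((continuous_pA hp).comp hcgw) hψ hcψ).const_mul _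
    intro x
    have hx := hu.pos x
    have hφx := h0 x
    simp only
    have hy := young hp (a := φ x * ((u x)⁻¹ * ‖gradient u x‖))
      (b := (p - 1)⁻¹ * ‖gradient φ x‖) (by positivity) (by positivity)
    rw [grad_mul (diff_of (hws (1 - p)) x) (diff_of (contDiff_rpow_p hp hφ) x),
      grad_rpow_p hp hφ,
      grad_comp (h := fun t => t ^ (1 - p)) (diff_of hu.cd x)
        (Real.hasDerivAt_rpow_const (Or.inl hx.ne')), inner_add_right,
      real_inner_smul_right, real_inner_smul_right, real_inner_smul_right,
      real_inner_smul_right, inner_pA hp]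
    have hcs : ⟪pA p (gradient u x), gradient φ x⟫ ≤
        (‖gradient u x‖ ^ (p - 1) * ‖gradient φ x‖) := by
      rw [← norm_pA hp]
      exact (real_inner_le_norm _ _)
    have ea : (φ x * ((u x)⁻¹ * ‖gradient u x‖)) ^ p =
        φ x ^ p * (u x ^ (1 - p - 1) * ‖gradient u x‖ ^ p) := by
      rw [Real.mul_rpow hφx (by positivity), Real.mul_rpow (by positivity) (by positivity),
        Real.inv_rpow hx.le, ← Real.rpow_neg hx.le]
      congr 3; ring
    have eab : p * (φ x * ((u x)⁻¹ * ‖gradient u x‖)) ^ (p - 1) *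
        ((p - 1)⁻¹ * ‖gradient φ x‖) = (p - 1)⁻¹ *
        (u x ^ (1 - p) * (p * φ x ^ (p - 1) * (‖gradient u x‖ ^ (p - 1) * ‖gradient φ x‖))) := by
      rw [Real.mul_rpow hφx (by positivity), Real.mul_rpow (by positivity) (by positivity),
        Real.inv_rpow hx.le, ← Real.rpow_neg hx.le]
      have : -(p - 1) = 1 - p := by ring
      rw [this]; ring
    have h5 : 0 ≤ (p - 1)⁻¹ * (u x ^ (1 - p) * (p * φ x ^ (p - 1))) := by positivity
    rw [ea] at hy ⊢
    rw [eab] at hy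
    have h7 := mul_le_mul_of_nonneg_left hcs h5
    have h8 : -(p - 1)⁻¹ * (u x ^ (1 - p) * (p * φ x ^ (p - 1) *
        ⟪pA p (gradient u x), gradient φ x⟫) +
        φ x ^ p * ((1 - p) * u x ^ (1 - p - 1) * ‖gradient u x‖ ^ p)) =
        φ x ^ p * (u x ^ (1 - p - 1) * ‖gradient u x‖ ^ p) -
        (p - 1)⁻¹ * (u x ^ (1 - p) * (p * φ x ^ (p - 1))) *
          ⟪pA p (gradient u x), gradient φ x⟫ := by
      field_simp; ring
    rw [h8]
    linarith
  rw [integral_sub (ia.div_const 2) (ib.const_mul _), integral_div, integral_const_mul,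
    integral_const_mul, e] at hle
  linarith

/-! ### Cutoffs, Sobolev inequality, Moser iteration -/

lemma smoothTransition_deriv_bound :
    ∃ K : ℝ, 0 < K ∧ (∀ t, |deriv Real.smoothTransition t| ≤ K) ∧
      ∀ t < 0, deriv Real.smoothTransition t = 0 := by
  have hc : Continuous (deriv Real.smoothTransition) :=
    (Real.smoothTransition.contDiff (n := 1)).continuous_deriv le_rfl
  have h0 : ∀ t < 0, deriv Real.smoothTransition t = 0 := by
    intro t ht
    have : Real.smoothTransition =ᶠ[𝓝 t] fun _ => 0 := by
      filter_upwards [Iio_mem_nhds ht] with y hy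
      exact Real.smoothTransition.zero_of_nonpos (le_of_lt hy)
    rw [this.deriv_eq]; simp
  have h1 : ∀ t, 1 < t → deriv Real.smoothTransition t = 0 := by
    intro t ht
    have : Real.smoothTransition =ᶠ[𝓝 t] fun _ => 1 := by
      filter_upwards [Ioi_mem_nhds ht] with y hy
      exact Real.smoothTransition.one_of_one_le (le_of_lt hy)
    rw [this.deriv_eq]; simp
  have hcs : HasCompactSupport (deriv Real.smoothTransition) := by
    apply HasCompactSupport.intro (isCompact_Icc (a := (0 : ℝ)) (b := 1))
    intro x hx
    simp only [mem_Icc, not_and_or, not_le] at hx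
    rcases hx with h | h
    · exact h0 x h
    · exact h1 x h
  obtain ⟨K, hK⟩ := hcs.exists_bound_of_continuous hc
  refine ⟨|K| + 1, by positivity, fun t => ?_, h0⟩
  have := hK t
  rw [Real.norm_eq_abs] at this
  linarith [le_abs_self K]

lemma exists_cutoff (N : ℕ) : ∃ K : ℝ, 0 < K ∧ ∀ ρ' ρ : ℝ, 0 < ρ' → ρ' < ρ →
    ∃ φ : E N → ℝ, ContDiff ℝ 1 φ ∧ HasCompactSupport φ ∧ (∀ x, 0 ≤ φ x) ∧
      (∀ x, ‖x‖ ≤ ρ' → φ x = 1) ∧ (∀ x, ‖gradient φ x‖ ≤ K / (ρ - ρ')) ∧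
      (∀ x, ρ < ‖x‖ → gradient φ x = 0) := by
  obtain ⟨K, hK, hb, hz⟩ := smoothTransition_deriv_bound
  refine ⟨2 * K, by positivity, fun ρ' ρ h0 h => ?_⟩
  have hc : 0 < ρ ^ 2 - ρ' ^ 2 := by nlinarith
  let t : E N → ℝ := fun x => (ρ ^ 2 - ‖x‖ ^ 2) / (ρ ^ 2 - ρ' ^ 2)
  have hcd : ContDiff ℝ 1 (fun x => Real.smoothTransition (t x)) := by
    apply (Real.smoothTransition.contDiff (n := 1)).comp
    exact (contDiff_const.sub (contDiff_norm_sq ℝ)).div_const _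
  have hgr : ∀ x, ‖gradient (fun x => Real.smoothTransition (t x)) x‖ ≤
      |deriv Real.smoothTransition (t x)| * (2 * ‖x‖ / (ρ ^ 2 - ρ' ^ 2)) := by
    intro x
    have ht : HasFDerivAt t ((ρ ^ 2 - ρ' ^ 2)⁻¹ • (-((2 : ℕ) • innerSL ℝ x) : E N →L[ℝ] ℝ)) x := by
      have := (((hasStrictFDerivAt_norm_sq x).hasFDerivAt.const_sub (ρ ^ 2)).const_smul
        (ρ ^ 2 - ρ' ^ 2)⁻¹)
      refine this.congr_of_eventuallyEq (Eventually.of_forall fun y => ?_)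
      simp [t, div_eq_inv_mul]
    have hd : HasDerivAt Real.smoothTransition (deriv Real.smoothTransition (t x)) (t x) :=
      ((Real.smoothTransition.contDiff (n := 1)).differentiable one_ne_zero _).hasDerivAt
    have := (hd.comp_hasFDerivAt x ht).fderiv
    rw [norm_grad]
    change ‖fderiv ℝ (Real.smoothTransition ∘ t) x‖ ≤ _
    rw [this, norm_smul, Real.norm_eq_abs]
    gcongr
    rw [norm_smul, norm_neg, Real.norm_of_nonneg (by positivity), ← div_eq_inv_mul]
    gcongr
    rw [two_nsmul, two_mul]
    refine (norm_add_le _ _).trans ?_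
    rw [innerSL_apply_norm]
  have hg0 : ∀ x : E N, ρ < ‖x‖ → gradient (fun x => Real.smoothTransition (t x)) x = 0 := by
    intro x hx
    have htx : t x < 0 := by
      apply div_neg_of_neg_of_pos _ hc
      nlinarith
    have := hgr x
    rw [hz _ htx] at this
    simpa using this
  refine ⟨fun x => Real.smoothTransition (t x), hcd, ?_, fun x => Real.smoothTransition.nonneg _,
    fun x hx => ?_, fun x => ?_, hg0⟩
  · apply HasCompactSupport.intro (isCompact_closedBall (0 : E N) ρ)
    intro x hx
    simp only [mem_closedBall, dist_zero_right, not_le] at hx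
    apply Real.smoothTransition.zero_of_nonpos
    apply div_nonpos_of_nonpos_of_nonneg _ hc.le
    nlinarith
  · apply Real.smoothTransition.one_of_one_le
    rw [one_le_div hc]
    nlinarith [norm_nonneg x]
  · rcases lt_or_ge ρ ‖x‖ with hx | hx
    · rw [hg0 x hx, norm_zero]
      have : 0 < ρ - ρ' := by linarith
      positivity
    · refine (hgr x).trans ?_
      calc |deriv Real.smoothTransition (t x)| * (2 * ‖x‖ / (ρ ^ 2 - ρ' ^ 2))
          ≤ K * (2 * ρ / (ρ ^ 2 - ρ' ^ 2)) := by gcongr; exact hb _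
        _ ≤ 2 * K / (ρ - ρ') := by
          have h2 : 0 < ρ - ρ' := by linarith
          rw [← mul_div_assoc, div_le_div_iff₀ hc h2]
          have : 0 ≤ K * (ρ - ρ') * ρ' := by positivity
          nlinarith

lemma sobolev (N : ℕ) {p : ℝ} (hp : 1 < p) (hN : p < N) : ∃ C : ℝ, 0 < C ∧
    ∀ g : E N → ℝ, ContDiff ℝ 1 g → HasCompactSupport g →
      (∫ x, |g x| ^ (p * (N / (N - p)))) ^ ((N - p) / N) ≤ C * ∫ x, ‖gradient g x‖ ^ p := by
  have hp0 : 0 < p := by linarith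
  have hN0 : (0 : ℝ) < N := by linarith
  have hNp : (0 : ℝ) < N - p := by linarith
  let P : NNReal := ⟨p, hp0.le⟩
  let Q : NNReal := ⟨p * (N / (N - p)), by positivity⟩
  let C : NNReal := eLpNormLESNormFDerivOfEqInnerConst (volume : Measure (E N)) (P : ℝ)
  refine ⟨(C : ℝ) ^ p + 1, by positivity, fun g hg hc => ?_⟩
  have hfr : Module.finrank ℝ (E N) = N := by simp
  have hS : eLpNorm g Q volume ≤ C * eLpNorm (fderiv ℝ g) P volume := by
    apply eLpNorm_le_eLpNorm_fderiv_of_eq_inner (μ := volume) hg hc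
    · exact_mod_cast hp.le
    · rw [hfr]; exact_mod_cast hN0
    · rw [hfr]
      change (p * (N / (N - p)))⁻¹ = p⁻¹ - (N : ℝ)⁻¹
      field_simp
  have hQ0 : 0 < p * (N / (N - p)) := by positivity
  have m1 : MemLp g Q volume := hg.continuous.memLp_of_hasCompactSupport hc
  have m2 : MemLp (fderiv ℝ g) P volume :=
    (hg.continuous_fderiv one_ne_zero).memLp_of_hasCompactSupport (hc.fderiv (𝕜 := ℝ))
  have hQn : (Q : ENNReal) ≠ 0 := by
    have : Q ≠ 0 := by rw [← NNReal.coe_ne_zero]; exact hQ0.ne'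
    exact_mod_cast this
  have hPn : (P : ENNReal) ≠ 0 := by
    have : P ≠ 0 := by rw [← NNReal.coe_ne_zero]; exact hp0.ne'
    exact_mod_cast this
  rw [m1.eLpNorm_eq_integral_rpow_norm hQn ENNReal.coe_ne_top,
    m2.eLpNorm_eq_integral_rpow_norm hPn ENNReal.coe_ne_top, ENNReal.coe_toReal,
    ENNReal.coe_toReal] at hS
  have hC : (C : ENNReal) = ENNReal.ofReal (C : ℝ) := by simp
  change _ ≤ (C : ENNReal) * _ at hS
  rw [hC, ← ENNReal.ofReal_mul (NNReal.coe_nonneg C), ENNReal.ofReal_le_ofReal_iff (by positivity)] at hS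
  have eP : (P : ℝ) = p := rfl
  have eQ : (Q : ℝ) = p * (N / (N - p)) := rfl
  simp only [eP, eQ, Real.norm_eq_abs] at hS
  simp_rw [← norm_grad] at hS
  have I1 : 0 ≤ ∫ x, |g x| ^ (p * (N / (N - p))) := integral_nonneg fun x => by positivity
  have I2 : 0 ≤ ∫ x, ‖gradient g x‖ ^ p := integral_nonneg fun x => by positivity
  have := Real.rpow_le_rpow (by positivity) hS hp0.le
  rw [← Real.rpow_mul I1, Real.mul_rpow (NNReal.coe_nonneg C) (by positivity), ← Real.rpow_mul I2,
    inv_mul_cancel₀ hp0.ne', Real.rpow_one] at this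
  have e : (p * (N / (N - p)))⁻¹ * p = (N - p) / N := by field_simp
  rw [e] at this
  refine this.trans ?_
  change (C : ℝ) ^ p * _ ≤ _
  nlinarith

lemma add_rpow_le {p a b : ℝ} (hp : 1 < p) (ha : 0 ≤ a) (hb : 0 ≤ b) :
    (a + b) ^ p ≤ 2 ^ p * (a ^ p + b ^ p) := by
  have h1 : a + b ≤ 2 * max a b := by linarith [le_max_left a b, le_max_right a b]
  calc (a + b) ^ p ≤ (2 * max a b) ^ p := Real.rpow_le_rpow (by positivity) h1 (by linarith)
    _ = 2 ^ p * (max a b) ^ p := by rw [Real.mul_rpow (by norm_num) (by positivity)]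
    _ ≤ _ := by
      gcongr
      have := Real.rpow_nonneg ha p
      have := Real.rpow_nonneg hb p
      rcases max_choice a b with h | h <;> rw [h] <;> linarith

lemma moser_step (N : ℕ) {p : ℝ} (hp : 1 < p) (hN : p < N) : ∃ C : ℝ, 1 ≤ C ∧
    ∀ w : E N → ℝ, IsSub p w → ∀ s ρ' ρ : ℝ, 1 ≤ s → 0 < ρ' → ρ' < ρ →
      (∫ x in closedBall 0 ρ', w x ^ (p * (N / (N - p)) * s)) ^ ((N - p) / N) ≤
        C * (s / (ρ - ρ')) ^ p * ∫ x in closedBall 0 ρ, w x ^ (p * s) := by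
  obtain ⟨K, hK, hcut⟩ := exists_cutoff N
  obtain ⟨S, hS, hsob⟩ := sobolev N hp hN
  have hp0 : 0 < p := by linarith
  have hN0 : (0 : ℝ) < N := by linarith
  have hNp : (0 : ℝ) < N - p := by linarith
  set C0 : ℝ := 2 ^ p * (2 * (2 * p) ^ p + 1) with hC0
  have hC0p : 0 < C0 := by positivity
  refine ⟨S * C0 * K ^ p + 1, by nlinarith [show 0 < S * C0 * K ^ p by positivity], ?_⟩
  intro w hw s ρ' ρ hs h0 h
  obtain ⟨φ, hφ, hc, hφ0, hφ1, hφg, hφz⟩ := hcut ρ' ρ h0 h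
  have hd : 0 < ρ - ρ' := by linarith
  have hws : ∀ t : ℝ, ContDiff ℝ 1 (fun x => w x ^ t) := fun t =>
    hw.cd.rpow_const_of_ne (fun x => (hw.pos x).ne')
  have hg : ContDiff ℝ 1 (fun x => φ x * w x ^ s) := hφ.mul (hws s)
  have hcg : HasCompactSupport (fun x => φ x * w x ^ s) := hc.mul_right
  have h1 := hsob _ hg hcg
  have hcac := hw.caccioppoli hp hφ hc hφ0 hs
  set X := ∫ x, (φ x * (w x ^ (s - 1) * ‖gradient w x‖)) ^ p
  set Y := ∫ x, (w x ^ s * ‖gradient φ x‖) ^ p with hY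
  have hY0 : 0 ≤ Y := integral_nonneg fun x => by have := hw.pos x; positivity
  have ia : Integrable (fun x => (φ x * (w x ^ (s - 1) * ‖gradient w x‖)) ^ p) := by
    apply integrable_cc _ hc
    · intro x h _; simp [h, Real.zero_rpow hp0.ne']
    · exact (hφ.continuous.mul ((hws _).continuous.mul (continuous_grad hw.cd).norm)).rpow_const
        (fun _ => Or.inr hp0.le)
  have ib : Integrable (fun x => (w x ^ s * ‖gradient φ x‖) ^ p) := by
    apply integrable_cc _ hc
    · intro x _ h; simp [h, Real.zero_rpow hp0.ne']
    · exact ((hws _).continuous.mul (continuous_grad hφ).norm).rpow_const (fun _ => Or.inr hp0.le)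
  have h2 : ∫ x, ‖gradient (fun x => φ x * w x ^ s) x‖ ^ p ≤ 2 ^ p * (s ^ p * X + Y) := by
    have : 2 ^ p * (s ^ p * X + Y) = ∫ x, 2 ^ p * (s ^ p *
        (φ x * (w x ^ (s - 1) * ‖gradient w x‖)) ^ p + (w x ^ s * ‖gradient φ x‖) ^ p) := by
      rw [integral_const_mul, integral_add (ia.const_mul _) ib, integral_const_mul]
    rw [this]
    apply integral_mono
    · apply Continuous.integrable_of_hasCompactSupport
      · exact (continuous_grad hg).norm.rpow_const (fun _ => Or.inr hp0.le)
      · exact (hcs_grad hcg).comp_left (g := fun v : E N => ‖v‖ ^ p)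
          (by simp [Real.zero_rpow hp0.ne'])
    · exact ((ia.const_mul _).add ib).const_mul _
    intro x
    have hx := hw.pos x
    have hφx := hφ0 x
    simp only
    rw [← Real.mul_rpow (by positivity) (by positivity)]
    refine le_trans ?_ (add_rpow_le hp (by positivity) (by positivity))
    apply Real.rpow_le_rpow (norm_nonneg _) _ hp0.le
    rw [grad_mul (diff_of hφ x) (diff_of (hws s) x),
      grad_comp (h := fun t => t ^ s) (diff_of hw.cd x)
        (Real.hasDerivAt_rpow_const (Or.inl hx.ne'))]
    refine (norm_add_le _ _).trans (le_of_eq ?_)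
    rw [norm_smul, norm_smul, norm_smul, Real.norm_of_nonneg hφx,
      Real.norm_of_nonneg (by positivity), Real.norm_of_nonneg (by positivity)]
    ring
  have hsp : 1 ≤ s ^ p := Real.one_le_rpow hs hp0.le
  have h3 : 2 ^ p * (s ^ p * X + Y) ≤ C0 * s ^ p * Y := by
    rw [hC0, mul_assoc, mul_assoc]
    gcongr
    have := mul_le_mul_of_nonneg_left hcac (by positivity : 0 ≤ s ^ p)
    nlinarith
  have iB : ∀ R t : ℝ, IntegrableOn (fun x => w x ^ t) (closedBall 0 R) := fun R t =>
    (hws t).continuous.continuousOn.integrableOn_compact (isCompact_closedBall _ _)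
  have h4 : Y ≤ (K / (ρ - ρ')) ^ p * ∫ x in closedBall 0 ρ, w x ^ (p * s) := by
    rw [← integral_const_mul, ← integral_indicator measurableSet_closedBall, hY]
    apply integral_mono ib
    · rw [integrable_indicator_iff measurableSet_closedBall]
      exact (iB ρ _).const_mul _
    intro x
    have hx := hw.pos x
    by_cases hxb : x ∈ closedBall (0 : E N) ρ
    · simp only [indicator_of_mem hxb]
      rw [Real.mul_rpow (by positivity) (by positivity), mul_comm, ← Real.rpow_mul hx.le,
        mul_comm s p]
      gcongr
      exact hφg x
    · simp only [indicator_of_notMem hxb]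
      simp only [mem_closedBall, dist_zero_right, not_le] at hxb
      rw [hφz x hxb]
      simp [Real.zero_rpow hp0.ne']
  have h5 : ∫ x in closedBall 0 ρ', w x ^ (p * (N / (N - p)) * s) ≤
      ∫ x, |φ x * w x ^ s| ^ (p * (N / (N - p))) := by
    have hQ : 0 < p * (N / (N - p)) := by positivity
    rw [← integral_indicator measurableSet_closedBall]
    apply integral_mono
    · rw [integrable_indicator_iff measurableSet_closedBall]
      exact iB _ _
    · apply integrable_cc _ hc
      · intro x h _; simp [h, Real.zero_rpow hQ.ne']
      · exact hg.continuous.abs.rpow_const (fun _ => Or.inr hQ.le)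
    intro x
    have hx := hw.pos x
    by_cases hxb : x ∈ closedBall (0 : E N) ρ'
    · simp only [indicator_of_mem hxb]
      rw [hφ1 x (by simpa using hxb), one_mul, abs_of_nonneg (by positivity),
        ← Real.rpow_mul hx.le, mul_comm s]
    · simp only [indicator_of_notMem hxb]
      positivity
  have hI0 : 0 ≤ ∫ x in closedBall 0 ρ, w x ^ (p * s) :=
    integral_nonneg fun x => by have := hw.pos x; positivity
  calc (∫ x in closedBall 0 ρ', w x ^ (p * (N / (N - p)) * s)) ^ ((N - p) / N)
      ≤ (∫ x, |φ x * w x ^ s| ^ (p * (N / (N - p)))) ^ ((N - p) / N) := by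
        apply Real.rpow_le_rpow _ h5 (by positivity)
        exact integral_nonneg fun x => by have := hw.pos x; positivity
    _ ≤ S * (C0 * s ^ p * ((K / (ρ - ρ')) ^ p * ∫ x in closedBall 0 ρ, w x ^ (p * s))) := by
        refine h1.trans ?_
        gcongr
        refine (h2.trans h3).trans ?_
        gcongr
    _ = (S * C0 * K ^ p) * (s / (ρ - ρ')) ^ p * ∫ x in closedBall 0 ρ, w x ^ (p * s) := by
        rw [Real.div_rpow (by positivity) hd.le, Real.div_rpow (by positivity) hd.le]; ring
    _ ≤ _ := by
        gcongr
        linarith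

lemma iter_bound {χ c k : ℝ} (hχ : 1 < χ) (hc : 0 ≤ c) (hk : 0 ≤ k) (I : ℕ → ℝ)
    (h0 : ∀ j, 0 ≤ I j)
    (h : ∀ j, I (j + 1) ≤ (Real.exp (c + j * k) * I j) ^ χ) (j : ℕ) :
    I j ≤ (Real.exp ((χ * c + χ / (χ - 1) * k) / (χ - 1)) * I 0) ^ (χ ^ j) := by
  set a := χ / (χ - 1) with ha
  set l := (χ * c + a * k) / (χ - 1) with hl
  have h1 : 0 < χ - 1 := by linarith
  have ha0 : 0 ≤ a := by positivity
  have hl0 : 0 ≤ l := by positivity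
  set X := Real.exp l * I 0 with hX
  have hX0 : 0 ≤ X := mul_nonneg (Real.exp_pos _).le (h0 0)
  have claim : ∀ j : ℕ, I j ≤ Real.exp (-l - j * a * k) * X ^ (χ ^ j) := by
    intro j
    induction j with
    | zero =>
      simp only [Nat.cast_zero, zero_mul, sub_zero, pow_zero, Real.rpow_one]
      rw [hX, ← mul_assoc, ← Real.exp_add]; simp
    | succ j ih =>
      refine (h j).trans ?_
      calc (Real.exp (c + j * k) * I j) ^ χ
          ≤ (Real.exp (c + j * k) * (Real.exp (-l - j * a * k) * X ^ (χ ^ j))) ^ χ := by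
            apply Real.rpow_le_rpow (mul_nonneg (Real.exp_pos _).le (h0 j)) _ (by linarith)
            gcongr
        _ = Real.exp ((c + j * k + (-l - j * a * k)) * χ) * X ^ (χ ^ (j + 1)) := by
            rw [← mul_assoc, ← Real.exp_add, Real.mul_rpow (Real.exp_pos _).le (by positivity),
              ← Real.exp_mul, ← Real.rpow_mul hX0, pow_succ]
        _ = _ := by
            congr 2
            push_cast
            rw [hl, ha]
            field_simp
            ring
  refine (claim j).trans ?_
  have : Real.exp (-l - j * a * k) ≤ 1 := by
    rw [Real.exp_le_one_iff]
    have : 0 ≤ (j : ℝ) * a * k := by positivity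
    linarith
  have h3 : 0 ≤ X ^ (χ ^ j) := by positivity
  nlinarith

lemma sup_bound (N : ℕ) {p : ℝ} (hp : 1 < p) (hN : p < N) : ∃ D : ℝ, 0 < D ∧
    ∀ w : E N → ℝ, IsSub p w → w 0 ^ p ≤ D * ∫ x in closedBall 0 1, w x ^ p := by
  obtain ⟨C, hC, hstep⟩ := moser_step N hp hN
  have hp0 : 0 < p := by linarith
  have hN0 : (0 : ℝ) < N := by linarith
  have hNp : (0 : ℝ) < N - p := by linarith
  set χ : ℝ := N / (N - p) with hχd
  have hχ : 1 < χ := by rw [hχd, one_lt_div hNp]; linarith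
  have hχ0 : 0 < χ := by linarith
  have hinv : ((N : ℝ) - p) / N = χ⁻¹ := by rw [hχd, inv_div]
  set c := Real.log (C * 4 ^ p) with hc
  set k := Real.log ((2 * χ) ^ p) with hk
  have hc0 : 0 ≤ c := Real.log_nonneg (by
    have : (1 : ℝ) ≤ 4 ^ p := Real.one_le_rpow (by norm_num) hp0.le
    nlinarith)
  have hk0 : 0 ≤ k := Real.log_nonneg (Real.one_le_rpow (by linarith) hp0.le)
  refine ⟨Real.exp ((χ * c + χ / (χ - 1) * k) / (χ - 1)), Real.exp_pos _, fun w hw => ?_⟩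
  have hws : ∀ t : ℝ, ContDiff ℝ 1 (fun x => w x ^ t) := fun t =>
    hw.cd.rpow_const_of_ne (fun x => (hw.pos x).ne')
  have iB : ∀ R t : ℝ, IntegrableOn (fun x => w x ^ t) (closedBall 0 R) := fun R t =>
    (hws t).continuous.continuousOn.integrableOn_compact (isCompact_closedBall _ _)
  let I : ℕ → ℝ := fun j => ∫ x in closedBall 0 (1 / 2 + (1 / 2) ^ (j + 1)), w x ^ (p * χ ^ j)
  have hI0 : ∀ j, 0 ≤ I j := fun j =>
    integral_nonneg fun x => by have := hw.pos x; positivity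
  have hI : ∀ j, I (j + 1) ≤ (Real.exp (c + j * k) * I j) ^ χ := by
    intro j
    have := hstep w hw (χ ^ j) (1 / 2 + (1 / 2) ^ (j + 1 + 1)) (1 / 2 + (1 / 2) ^ (j + 1))
      (one_le_pow₀ hχ.le) (by positivity) (by
        rw [pow_succ _ (j + 1)]
        have : (0 : ℝ) < (1 / 2) ^ (j + 1) := by positivity
        linarith)
    have e1 : p * χ * χ ^ j = p * χ ^ (j + 1) := by rw [pow_succ]; ring
    rw [hinv, e1] at this
    have e2 : C * (χ ^ j / (1 / 2 + (1 / 2) ^ (j + 1) - (1 / 2 + (1 / 2) ^ (j + 1 + 1)))) ^ p =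
        Real.exp (c + j * k) := by
      rw [Real.exp_add, mul_comm (j : ℝ), Real.exp_mul, hc, hk, Real.exp_log (by positivity),
        Real.exp_log (by positivity), Real.rpow_natCast, mul_assoc]
      congr 1
      rw [Real.rpow_pow_comm (by positivity), ← Real.mul_rpow (by norm_num) (by positivity)]
      congr 1
      have : (1 / 2 + (1 / 2) ^ (j + 1) - (1 / 2 + (1 / 2) ^ (j + 1 + 1)) : ℝ) =
        (4 * 2 ^ j)⁻¹ := by
        have h2j : (1 / 2 : ℝ) ^ j = (2 ^ j)⁻¹ := by rw [one_div, inv_pow]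
        simp only [pow_succ, h2j, mul_inv]; ring
      rw [this, mul_pow]
      field_simp
    rw [e2] at this
    have h2 := Real.rpow_le_rpow (by have := hI0 (j + 1); exact Real.rpow_nonneg this _) this hχ0.le
    rwa [← Real.rpow_mul (hI0 (j + 1)), inv_mul_cancel₀ hχ0.ne', Real.rpow_one] at h2
  have hb := iter_bound hχ hc0 hk0 I hI0 hI
  have eI : I 0 = ∫ x in closedBall 0 1, w x ^ p := by
    simp only [I]; norm_num
  rw [eI] at hb
  set X := Real.exp ((χ * c + χ / (χ - 1) * k) / (χ - 1)) * ∫ x in closedBall 0 1, w x ^ p with hX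
  have hX0 : 0 ≤ X := by
    rw [hX, ← eI]; exact mul_nonneg (Real.exp_pos _).le (hI0 0)
  by_contra hcon
  push Not at hcon
  obtain ⟨T, hT1, hT2⟩ := exists_between hcon
  have hT0 : 0 < T := by linarith
  have hev : ∀ᶠ x in 𝓝 (0 : E N), T < w x ^ p :=
    (hws p).continuous.continuousAt.eventually (lt_mem_nhds hT2)
  obtain ⟨δ, hδ, hball⟩ := Metric.eventually_nhds_iff_ball.1 hev
  set δ' := min (δ / 2) (1 / 2)
  have hδ' : 0 < δ' := by positivity
  set v := (volume : Measure (E N)).real (closedBall 0 δ') with hv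
  have hv0 : 0 < v := by
    rw [hv, measureReal_def]
    exact ENNReal.toReal_pos (measure_closedBall_pos _ _ hδ').ne'
      (isCompact_closedBall _ _).measure_lt_top.ne
  have hlow : ∀ j, T ^ (χ ^ j) * v ≤ X ^ (χ ^ j) := by
    intro j
    refine le_trans ?_ (hb j)
    calc T ^ (χ ^ j) * v = ∫ x in closedBall (0 : E N) δ', T ^ (χ ^ j) := by
          rw [setIntegral_const, smul_eq_mul, mul_comm]
      _ ≤ ∫ x in closedBall (0 : E N) δ', w x ^ (p * χ ^ j) := by
          apply setIntegral_mono_on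
          · exact integrableOn_const (isCompact_closedBall _ _).measure_lt_top.ne
          · exact iB _ _
          · exact measurableSet_closedBall
          · intro x hx
            rw [Real.rpow_mul (hw.pos x).le]
            apply Real.rpow_le_rpow hT0.le _ (by positivity)
            apply (hball x _).le
            have h1 : δ' ≤ δ / 2 := min_le_left _ _
            simp only [mem_closedBall, mem_ball] at hx ⊢
            linarith
      _ ≤ I j := by
          apply setIntegral_mono_set (iB _ _)
          · filter_upwards with x
            exact Real.rpow_nonneg (hw.pos x).le _
          · apply LE.le.eventuallyLE
            apply closedBall_subset_closedBall
            have h1 : δ' ≤ 1 / 2 := min_le_right _ _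
            have : (0 : ℝ) < (1 / 2) ^ (j + 1) := by positivity
            linarith
  have hr : ∀ j, v ≤ (X / T) ^ (χ ^ j) := by
    intro j
    rw [Real.div_rpow hX0 hT0.le, le_div_iff₀ (by positivity), mul_comm]
    exact hlow j
  have hlim : Tendsto (fun j : ℕ => (X / T) ^ (χ ^ j)) atTop (𝓝 0) := by
    have h1 : X / T < 1 := by rw [div_lt_one hT0]; exact hT1
    have h2 : -1 < X / T := by have : 0 ≤ X / T := by positivity
                               linarith
    exact (tendsto_rpow_atTop_of_base_lt_one _ h2 h1).comp (tendsto_pow_atTop_atTop_of_one_lt hχ)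
  have := ge_of_tendsto' hlim hr
  linarith

lemma jensen01 {p : ℝ} (hp : 1 < p) {g : ℝ → ℝ} (hg : Continuous g) (h0 : ∀ t, 0 ≤ g t) :
    (∫ t in Ioc (0 : ℝ) 1, g t) ^ p ≤ ∫ t in Ioc (0 : ℝ) 1, g t ^ p := by
  have : IsProbabilityMeasure (volume.restrict (Ioc (0 : ℝ) 1)) := ⟨by simp⟩
  have hc : Continuous fun t => g t ^ p := hg.rpow_const (fun _ => Or.inr (by linarith))
  refine ConvexOn.map_integral_le (convexOn_rpow hp.le)
    (Real.continuous_rpow_const (by linarith)).continuousOn isClosed_Ici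
    (Eventually.of_forall h0) ?_ ?_
  · exact (hg.integrableOn_Icc (a := 0) (b := 1)).mono_set Ioc_subset_Icc_self
  · exact (hc.integrableOn_Icc (a := 0) (b := 1)).mono_set Ioc_subset_Icc_self

lemma seg_bound {p : ℝ} (hp : 1 < p) {w : E N → ℝ} (hw : ContDiff ℝ 1 w) {x y : E N}
    (hx : ‖x‖ ≤ 4) (hy : ‖y‖ ≤ 4) :
    ENNReal.ofReal (|w x - w ((1 / 2 : ℝ) • (x + y))| ^ p) ≤
      ENNReal.ofReal (4 ^ p) * ∫⁻ t in Ioc (0 : ℝ) 1,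
        ENNReal.ofReal (‖gradient w ((1 - t / 2) • x + (t / 2) • y)‖ ^ p) := by
  have hcg := continuous_grad hw
  set γ : ℝ → E N := fun t => (1 - t / 2) • x + (t / 2) • y with hγ
  have hγc : Continuous γ := by fun_prop
  set v : E N := (1 / 2 : ℝ) • (y - x) with hv
  have hγd : ∀ t, HasDerivAt γ v t := by
    intro t
    have h1 : HasDerivAt (fun t : ℝ => (1 - t / 2)) (-(1 / 2)) t := by
      simpa using ((hasDerivAt_id t).div_const 2).const_sub 1
    have h2 : HasDerivAt (fun t : ℝ => (t / 2)) (1 / 2) t := by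
      simpa using ((hasDerivAt_id t).div_const 2)
    have e : v = -(1 / 2 : ℝ) • x + (1 / 2 : ℝ) • y := by
      rw [hv, smul_sub, neg_smul]; abel
    rw [e]
    exact (h1.smul_const x).add (h2.smul_const y)
  have hd : ∀ t, HasDerivAt (fun t => w (γ t)) (fderiv ℝ w (γ t) v) t := fun t =>
    ((diff_of hw (γ t)).hasFDerivAt).comp_hasDerivAt t (hγd t)
  have hfc : Continuous fun t => fderiv ℝ w (γ t) v :=
    ((hw.continuous_fderiv (by norm_num)).comp hγc).clm_apply continuous_const
  have hI := intervalIntegral.integral_eq_sub_of_hasDerivAt (a := 0) (b := 1)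
    (fun t _ => hd t) (hfc.intervalIntegrable _ _)
  have hg0 : γ 0 = x := by simp [hγ]
  have hg1 : γ 1 = (1 / 2 : ℝ) • (x + y) := by
    simp only [hγ]; rw [smul_add]; norm_num
  rw [hg0, hg1, intervalIntegral.integral_of_le zero_le_one] at hI
  have hvn : ‖v‖ ≤ 4 := by
    rw [hv, norm_smul]
    have := norm_sub_le y x
    norm_num; linarith
  have hgn : Continuous fun t => ‖gradient w (γ t)‖ := (hcg.comp hγc).norm
  have hb : |w x - w ((1 / 2 : ℝ) • (x + y))| ≤ 4 * ∫ t in Ioc (0 : ℝ) 1, ‖gradient w (γ t)‖ := by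
    rw [abs_sub_comm, ← hI, ← integral_const_mul]
    refine (norm_integral_le_integral_norm (f := fun t => fderiv ℝ w (γ t) v)).trans ?_
    refine integral_mono_of_nonneg (Eventually.of_forall fun _ => norm_nonneg _) ?_
      (Eventually.of_forall fun t => ?_)
    · exact ((continuous_const.mul hgn).integrableOn_Icc (a := 0) (b := 1)).mono_set
        Ioc_subset_Icc_self
    · show ‖fderiv ℝ w (γ t) v‖ ≤ 4 * ‖gradient w (γ t)‖
      rw [norm_grad]
      refine (ContinuousLinearMap.le_opNorm _ _).trans ?_
      rw [mul_comm]; gcongr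
  have hc : Continuous fun t => ‖gradient w (γ t)‖ ^ p :=
    hgn.rpow_const (fun _ => Or.inr (by linarith))
  rw [← ofReal_integral_eq_lintegral_ofReal
    ((hc.integrableOn_Icc (a := 0) (b := 1)).mono_set Ioc_subset_Icc_self)
    (Eventually.of_forall fun t => by positivity), ← ENNReal.ofReal_mul (by positivity)]
  apply ENNReal.ofReal_le_ofReal
  refine (Real.rpow_le_rpow (abs_nonneg _) hb (by linarith)).trans ?_
  rw [Real.mul_rpow (by norm_num) (integral_nonneg fun _ => norm_nonneg _)]
  gcongr
  exact jensen01 hp hgn fun _ => norm_nonneg _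

lemma lintegral_affine (f : E N → ENNReal) (hf : Measurable f) (a : ℝ) (ha : 0 < a) (b : E N) :
    ∫⁻ x, f (a • x + b) = ENNReal.ofReal ((a ^ N)⁻¹) * ∫⁻ x, f x := by
  have h1 : ∫⁻ x, f (a • x + b) = ∫⁻ z, f (z + b) ∂(Measure.map (a • ·) (volume : Measure (E N))) := by
    rw [lintegral_map (by fun_prop) (by fun_prop)]
  rw [h1, Measure.map_addHaar_smul _ ha.ne', lintegral_smul_measure, lintegral_add_right_eq_self]
  simp only [finrank_euclideanSpace, Fintype.card_fin, smul_eq_mul]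
  rw [abs_of_pos (by positivity)]

lemma lintegral_affine_ball (f : E N → ENNReal) (hf : Measurable f) (a : ℝ) (ha : 1 / 2 ≤ a)
    (b : E N) (h : ∀ x ∈ closedBall (0 : E N) 4, a • x + b ∈ closedBall (0 : E N) 4) :
    ∫⁻ x in closedBall (0 : E N) 4, f (a • x + b) ≤
      2 ^ N * ∫⁻ x in closedBall (0 : E N) 4, f x := by
  have hm : MeasurableSet (closedBall (0 : E N) 4) := isClosed_closedBall.measurableSet
  rw [← lintegral_indicator hm, ← lintegral_indicator hm]
  calc _ ≤ ∫⁻ x, (closedBall (0 : E N) 4).indicator f (a • x + b) := by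
        apply lintegral_mono
        intro x
        by_cases hx : x ∈ closedBall (0 : E N) 4
        · simp only [indicator_of_mem hx, indicator_of_mem (h x hx)]; exact le_rfl
        · simp only [indicator_of_notMem hx]; exact zero_le
    _ = _ := lintegral_affine _ (hf.indicator hm) a (by linarith) b
    _ ≤ _ := by
        gcongr
        have : (2 : ENNReal) ^ N = ENNReal.ofReal (2 ^ N) := by
          rw [ENNReal.ofReal_pow (by norm_num)]; simp
        rw [this]
        apply ENNReal.ofReal_le_ofReal
        rw [← inv_pow]
        apply pow_le_pow_left₀ (by positivity)
        rw [inv_le_comm₀ (by linarith) (by norm_num)]; linarith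

lemma poincare_half {p : ℝ} (hp : 1 < p) {w : E N → ℝ} (hw : ContDiff ℝ 1 w) :
    ∫⁻ y in closedBall (0 : E N) 4, ∫⁻ x in closedBall (0 : E N) 4,
      ENNReal.ofReal (|w x - w ((1 / 2 : ℝ) • (x + y))| ^ p) ≤
    volume (closedBall (0 : E N) 4) * (ENNReal.ofReal (4 ^ p) *
      (2 ^ N * ∫⁻ x in closedBall (0 : E N) 4, ENNReal.ofReal (‖gradient w x‖ ^ p))) := by
  have hm : MeasurableSet (closedBall (0 : E N) 4) := isClosed_closedBall.measurableSet
  have hcg := continuous_grad hw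
  have hfm : Measurable fun z => ENNReal.ofReal (‖gradient w z‖ ^ p) :=
    (hcg.norm.rpow_const (fun _ => Or.inr (by linarith))).measurable.ennreal_ofReal
  rw [mul_comm (volume _), ← setLIntegral_const]
  refine setLIntegral_mono' hm fun y hy => ?_
  calc _ ≤ ∫⁻ x in closedBall (0 : E N) 4, ENNReal.ofReal (4 ^ p) * ∫⁻ t in Ioc (0 : ℝ) 1,
        ENNReal.ofReal (‖gradient w ((1 - t / 2) • x + (t / 2) • y)‖ ^ p) :=
        setLIntegral_mono' hm fun x hx =>
          seg_bound hp hw (by simpa using hx) (by simpa using hy)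
    _ = ENNReal.ofReal (4 ^ p) * ∫⁻ x in closedBall (0 : E N) 4, ∫⁻ t in Ioc (0 : ℝ) 1,
        ENNReal.ofReal (‖gradient w ((1 - t / 2) • x + (t / 2) • y)‖ ^ p) :=
        lintegral_const_mul' _ _ ENNReal.ofReal_ne_top
    _ = ENNReal.ofReal (4 ^ p) * ∫⁻ t in Ioc (0 : ℝ) 1, ∫⁻ x in closedBall (0 : E N) 4,
        ENNReal.ofReal (‖gradient w ((1 - t / 2) • x + (t / 2) • y)‖ ^ p) := by
        rw [lintegral_lintegral_swap]
        apply Measurable.aemeasurable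
        apply hfm.comp (g := fun z => ENNReal.ofReal (‖gradient w z‖ ^ p))
          (f := fun q : E N × ℝ => (1 - q.2 / 2) • q.1 + (q.2 / 2) • y)
        fun_prop
    _ ≤ ENNReal.ofReal (4 ^ p) * ∫⁻ t in Ioc (0 : ℝ) 1, 
          2 ^ N * ∫⁻ x in closedBall (0 : E N) 4, ENNReal.ofReal (‖gradient w x‖ ^ p) := by
        gcongr ENNReal.ofReal (4 ^ p) * ?_
        refine setLIntegral_mono' measurableSet_Ioc fun t ht => ?_
        refine lintegral_affine_ball (fun z => ENNReal.ofReal (‖gradient w z‖ ^ p)) hfm _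
          (by linarith [ht.2]) _ fun x hx => ?_
        exact convex_closedBall (0 : E N) 4 hx hy (by linarith [ht.2]) (by linarith [ht.1])
          (by ring)
    _ = _ := by rw [setLIntegral_const]; simp

lemma poincare {p : ℝ} (hp : 1 < p) {w : E N → ℝ} (hw : ContDiff ℝ 1 w) :
    ∫⁻ y in closedBall (0 : E N) 4, ∫⁻ x in closedBall (0 : E N) 4,
      ENNReal.ofReal (|w x - w y| ^ p) ≤
    ENNReal.ofReal (2 ^ p) * (2 * (volume (closedBall (0 : E N) 4) * (ENNReal.ofReal (4 ^ p) *
      (2 ^ N * ∫⁻ x in closedBall (0 : E N) 4, ENNReal.ofReal (‖gradient w x‖ ^ p))))) := by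
  have hA := poincare_half hp hw
  set A := volume (closedBall (0 : E N) 4) * (ENNReal.ofReal (4 ^ p) *
      (2 ^ N * ∫⁻ x in closedBall (0 : E N) 4, ENNReal.ofReal (‖gradient w x‖ ^ p)))
  have hwc := hw.continuous
  have hM : Measurable fun q : E N × E N =>
      ENNReal.ofReal (|w q.2 - w ((1 / 2 : ℝ) • (q.2 + q.1))| ^ p) := by
    apply Measurable.ennreal_ofReal
    apply Continuous.measurable
    exact Continuous.rpow_const (by fun_prop) (fun _ => Or.inr (by linarith))
  have hM2 : Measurable fun q : E N × E N =>
      ENNReal.ofReal (|w q.1 - w ((1 / 2 : ℝ) • (q.1 + q.2))| ^ p) :=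
    hM.comp measurable_swap
  have hA' : ∫⁻ y in closedBall (0 : E N) 4, ∫⁻ x in closedBall (0 : E N) 4,
      ENNReal.ofReal (|w y - w ((1 / 2 : ℝ) • (y + x))| ^ p) ≤ A := by
    rw [lintegral_lintegral_swap hM2.aemeasurable]; exact hA
  calc _ ≤ ∫⁻ y in closedBall (0 : E N) 4, ∫⁻ x in closedBall (0 : E N) 4,
      ENNReal.ofReal (2 ^ p) * (ENNReal.ofReal (|w x - w ((1 / 2 : ℝ) • (x + y))| ^ p) +
        ENNReal.ofReal (|w y - w ((1 / 2 : ℝ) • (y + x))| ^ p)) := by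
        refine lintegral_mono fun y => lintegral_mono fun x => ?_
        simp only
        rw [← ENNReal.ofReal_add (by positivity) (by positivity),
          ← ENNReal.ofReal_mul (by positivity)]
        apply ENNReal.ofReal_le_ofReal
        refine le_trans ?_ (add_rpow_le hp (abs_nonneg _) (abs_nonneg _))
        apply Real.rpow_le_rpow (abs_nonneg _) _ (by linarith)
        rw [add_comm y x, abs_sub_comm (w y)]
        exact abs_sub_le _ _ _
    _ = ENNReal.ofReal (2 ^ p) * ((∫⁻ y in closedBall (0 : E N) 4, ∫⁻ x in closedBall (0 : E N) 4,
        ENNReal.ofReal (|w x - w ((1 / 2 : ℝ) • (x + y))| ^ p)) +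
        ∫⁻ y in closedBall (0 : E N) 4, ∫⁻ x in closedBall (0 : E N) 4,
        ENNReal.ofReal (|w y - w ((1 / 2 : ℝ) • (y + x))| ^ p)) := by
        rw [← lintegral_add_left hM.lintegral_prod_right', ← lintegral_const_mul' _ _ ENNReal.ofReal_ne_top]
        congr 1; ext y
        rw [lintegral_const_mul' _ _ ENNReal.ofReal_ne_top]
        congr 1
        exact lintegral_add_left (hM.comp (measurable_prodMk_left (x := y))) _
    _ ≤ _ := by
        rw [two_mul]; gcongr

lemma IsSol.log_energy {p : ℝ} (N : ℕ) (hp : 1 < p) : ∃ C : ENNReal, C ≠ ⊤ ∧ ∀ u : E N → ℝ, IsSol p u →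
    ∫⁻ x in closedBall (0 : E N) 4,
      ENNReal.ofReal (‖gradient (fun x => Real.log (u x + 1) - Real.log (u x)) x‖ ^ p) ≤ C := by
  obtain ⟨K, hK, h⟩ := exists_cutoff N
  obtain ⟨φ, hφ, hc, h0, h1, -, -⟩ := h 4 8 (by norm_num) (by norm_num)
  refine ⟨ENNReal.ofReal (2*(2*p)^p * ∫ x, ((p-1)⁻¹ * ‖gradient φ x‖)^p), ENNReal.ofReal_ne_top,
    fun u hu => ?_⟩
  have hlc := hu.log_caccioppoli hp hφ hc h0
  have hm : MeasurableSet (closedBall (0 : E N) 4) := isClosed_closedBall.measurableSet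
  refine le_trans ?_ (ENNReal.ofReal_le_ofReal hlc)
  have hcont : Continuous fun x => (φ x * ((u x)⁻¹ * ‖gradient u x‖)) ^ p := by
    refine Continuous.rpow_const ?_ (fun _ => Or.inr (by linarith))
    exact hφ.continuous.mul ((hu.cd.continuous.inv₀ fun x => (hu.pos x).ne').mul
      (continuous_grad hu.cd).norm)
  rw [ofReal_integral_eq_lintegral_ofReal]
  · refine le_trans ?_ (setLIntegral_le_lintegral (closedBall (0 : E N) 4) _)
    refine setLIntegral_mono' hm fun x hx => ?_
    apply ENNReal.ofReal_le_ofReal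
    apply Real.rpow_le_rpow (norm_nonneg _) _ (by linarith)
    have hux := hu.pos x
    rw [h1 x (by simpa using hx), one_mul, hu.log_grad, norm_neg, norm_smul]
    gcongr
    rw [Real.norm_of_nonneg (by positivity)]
    apply inv_anti₀ hux
    nlinarith
  · refine integrable_cc hcont hc fun x hx _ => ?_
    rw [hx, zero_mul, Real.zero_rpow (by linarith)]
  · refine Eventually.of_forall fun x => ?_
    have hux := hu.pos x
    have := h0 x
    show 0 ≤ _
    positivity

lemma IsSol.log_Lp {p : ℝ} (N : ℕ) (hp : 1 < p) {θ : ℝ} (hθ : 0 < θ) :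
    ∃ C : ENNReal, C ≠ ⊤ ∧ ∀ u : E N → ℝ, IsSol p u →
    ENNReal.ofReal θ ≤ volume ({x | 1 ≤ u x} ∩ closedBall (0 : E N) 1) →
    ∫⁻ x in closedBall (0 : E N) 4,
      ENNReal.ofReal ((Real.log (u x + 1) - Real.log (u x)) ^ p) ≤ C := by
  obtain ⟨C₁, hC₁, hE⟩ := IsSol.log_energy N hp
  set V := volume (closedBall (0 : E N) 4) with hV
  have hVt : V ≠ ⊤ := measure_closedBall_lt_top.ne
  set P := ENNReal.ofReal (2 ^ p) * (2 * (V * (ENNReal.ofReal (4 ^ p) * (2 ^ N * C₁))))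
  have hPt : P ≠ ⊤ := by finiteness
  refine ⟨ENNReal.ofReal (2 ^ p) * (P + V * V) / ENNReal.ofReal θ, ?_, fun u hu hm => ?_⟩
  · apply ENNReal.div_ne_top
    · finiteness
    · simpa using hθ
  have hwS := hu.log_isSub hp
  have hP := (poincare hp hwS.cd).trans (show _ ≤ P by
    simp only [P]; gcongr; exact hE u hu)
  set w := fun x => Real.log (u x + 1) - Real.log (u x) with hw
  have hwc := hwS.cd.continuous
  set S := {x | 1 ≤ u x} ∩ closedBall (0 : E N) 1 with hS
  have hSm : MeasurableSet S :=
    ((isClosed_le continuous_const hu.cd.continuous).inter isClosed_closedBall).measurableSet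
  have hSB : S ⊆ closedBall (0 : E N) 4 :=
    inter_subset_right.trans (closedBall_subset_closedBall (by norm_num))
  set J := ∫⁻ x in closedBall (0 : E N) 4, ENNReal.ofReal (w x ^ p) with hJ
  have hMM : Measurable fun q : E N × E N => ENNReal.ofReal (|w q.2 - w q.1| ^ p) := by
    apply Measurable.ennreal_ofReal
    apply Continuous.measurable
    exact Continuous.rpow_const (by fun_prop) (fun _ => Or.inr (by linarith))
  have hpt : ∀ y ∈ S, J ≤ ENNReal.ofReal (2 ^ p) *
      ((∫⁻ x in closedBall (0 : E N) 4, ENNReal.ofReal (|w x - w y| ^ p)) + V) := by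
    intro y hy
    have hy1 : 1 ≤ u y := hy.1
    have hwy : w y ≤ 1 := by
      simp only [hw]
      rw [← Real.log_div (by linarith) (by linarith)]
      refine (Real.log_le_sub_one_of_pos (by positivity)).trans ?_
      rw [sub_le_iff_le_add, div_le_iff₀ (by linarith)]; linarith
    have hV1 : V = ∫⁻ x in closedBall (0 : E N) 4, 1 := by simp [hV]
    rw [hV1, ← lintegral_add_right _ measurable_const, ← lintegral_const_mul' _ _ ENNReal.ofReal_ne_top]
    apply lintegral_mono
    intro x
    simp only
    rw [← ENNReal.ofReal_one, ← ENNReal.ofReal_add (by positivity) (by norm_num),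
      ← ENNReal.ofReal_mul (by positivity)]
    apply ENNReal.ofReal_le_ofReal
    have := add_rpow_le hp (abs_nonneg (w x - w y)) zero_le_one
    rw [Real.one_rpow] at this
    refine le_trans ?_ this
    apply Real.rpow_le_rpow (hwS.pos x).le _ (by linarith)
    linarith [le_abs_self (w x - w y)]
  have hInt : J * volume S ≤ ENNReal.ofReal (2 ^ p) * (P + V * V) := by
    rw [← setLIntegral_const]
    refine (setLIntegral_mono' hSm hpt).trans ?_
    rw [lintegral_const_mul' _ _ ENNReal.ofReal_ne_top, lintegral_add_right _ measurable_const,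
      setLIntegral_const]
    gcongr
    · refine le_trans ?_ hP
      exact lintegral_mono_set hSB
    · exact measure_mono hSB
  rw [ENNReal.le_div_iff_mul_le (Or.inl (by simpa using hθ)) (Or.inl ENNReal.ofReal_ne_top)]
  exact (by gcongr : J * ENNReal.ofReal θ ≤ J * volume S).trans hInt

/-- Expansion of positivity at unit scale. -/
lemma IsSol.expand_one {p : ℝ} (N : ℕ) (hp : 1 < p) (hN : p < N) {θ : ℝ} (hθ : 0 < θ) :
    ∃ c : ℝ, 0 < c ∧ c < 1 ∧ ∀ u : E N → ℝ, IsSol p u →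
    ENNReal.ofReal θ ≤ volume ({x | 1 ≤ u x} ∩ closedBall (0 : E N) 1) →
    ∀ x, ‖x‖ ≤ 2 → c ≤ u x := by
  obtain ⟨C, hC, hL⟩ := IsSol.log_Lp N hp hθ
  obtain ⟨D, hD, hsup⟩ := sup_bound N hp hN
  set M := (ENNReal.ofReal D * C).toReal with hM
  have hM0 : 0 ≤ M := ENNReal.toReal_nonneg
  refine ⟨Real.exp (-(M ^ p⁻¹) - 1), Real.exp_pos _, ?_, fun u hu hm x hx => ?_⟩
  · rw [Real.exp_lt_one_iff]
    have : 0 ≤ M ^ p⁻¹ := by positivity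
    linarith
  have hJ := hL u hu hm
  set w := fun x => Real.log (u x + 1) - Real.log (u x) with hw
  have hv := hu.affine x one_pos one_pos
  simp only [one_smul, one_mul] at hv
  have hs := hsup _ (hv.log_isSub hp)
  have hwc := (hu.log_isSub hp).cd.continuous
  have hwp := (hu.log_isSub hp).pos
  simp only [add_zero] at hs
  change w x ^ p ≤ D * ∫ z in closedBall 0 1, w (x + z) ^ p at hs
  change Continuous w at hwc
  change ∀ x, 0 < w x at hwp
  have hwpc : Continuous fun z => w z ^ p := hwc.rpow_const (fun _ => Or.inr (by linarith))
  have hI : ∫⁻ z in closedBall (0 : E N) 1, ENNReal.ofReal (w (x + z) ^ p) ≤ C := by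
    refine le_trans ?_ hJ
    rw [← lintegral_indicator isClosed_closedBall.measurableSet,
      ← lintegral_indicator isClosed_closedBall.measurableSet,
      ← lintegral_add_left_eq_self ((closedBall (0 : E N) 4).indicator _) x]
    apply lintegral_mono
    intro z
    by_cases hz : z ∈ closedBall (0 : E N) 1
    · have : x + z ∈ closedBall (0 : E N) 4 := by
        rw [mem_closedBall_zero_iff] at hz ⊢
        linarith [norm_add_le x z]
      simp only [indicator_of_mem hz, indicator_of_mem this]; exact le_rfl
    · simp only [indicator_of_notMem hz]; exact zero_le
  have hwM : w x ^ p ≤ M := by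
    refine hs.trans ?_
    rw [hM, ENNReal.toReal_mul, ENNReal.toReal_ofReal hD.le]
    gcongr
    rw [integral_eq_lintegral_of_nonneg_ae
      (Eventually.of_forall fun z => Real.rpow_nonneg (hwp _).le _)
      (hwpc.comp (by fun_prop : Continuous fun z => x + z)).aestronglyMeasurable]
    exact ENNReal.toReal_mono hC hI
  have hwx : w x ≤ M ^ p⁻¹ := by
    rw [Real.le_rpow_inv_iff_of_pos (hwp x).le hM0 (by linarith)]; exact hwM
  have hux := hu.pos x
  have : -Real.log (u x) ≤ w x := by
    have : 0 ≤ Real.log (u x + 1) := Real.log_nonneg (by linarith)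
    simp only [hw]; linarith
  rw [← Real.le_log_iff_exp_le hux]; linarith

lemma IsSol.expand_unit {p : ℝ} (N : ℕ) (hp : 1 < p) (hN : p < N) :
    ∃ c η : ℝ, 0 < c ∧ c < 1 ∧ 0 < η ∧
    (∀ u : E N → ℝ, IsSol p u → (∀ x, ‖x‖ ≤ 1 → 1 ≤ u x) → ∀ x, ‖x‖ ≤ 2 → c ≤ u x) ∧
    (∀ u : E N → ℝ, IsSol p u → u 0 = 1 → (∀ x, ‖x‖ ≤ 1 → u x ≤ 2) →
      ∀ x, ‖x‖ ≤ 2 → η ≤ u x) := by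
  obtain ⟨D, hD, hsup⟩ := sup_bound N hp hN
  have hp0 : 0 < p := by linarith
  set B := closedBall (0 : E N) 1 with hB
  have hBm : MeasurableSet B := isClosed_closedBall.measurableSet
  have hBt : volume B ≠ ⊤ := measure_closedBall_lt_top.ne
  set V := volume.real B with hV
  have hV0 : 0 < V := ENNReal.toReal_pos (measure_closedBall_pos volume _ one_pos).ne' hBt
  set η₀ : ℝ := (1 / (2 * D * V)) ^ p⁻¹ with hη
  have hη0 : 0 < η₀ := by positivity
  have hηp : η₀ ^ p = 1 / (2 * D * V) := Real.rpow_inv_rpow (by positivity) hp0.ne'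
  set θ := min V (1 / (2 * D * 2 ^ p)) with hθ
  have hθ0 : 0 < θ := by positivity
  obtain ⟨c, hc0, hc1, hc⟩ := IsSol.expand_one N hp hN hθ0
  refine ⟨c, η₀ * c, hc0, hc1, by positivity, fun u hu h => hc u hu ?_, fun u hu h1 h2 x hx => ?_⟩
  · have : {x | 1 ≤ u x} ∩ B = B := by
      rw [inter_eq_right]; intro x hx; exact h x (by simpa [hB] using hx)
    rw [this]
    exact ENNReal.ofReal_le_of_le_toReal (min_le_left _ _)
  · set S := {x | η₀ ≤ u x} ∩ B with hS
    have hSm : MeasurableSet S :=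
      ((isClosed_le continuous_const hu.cd.continuous).inter isClosed_closedBall).measurableSet
    have hSt : volume S ≠ ⊤ := ((measure_mono inter_subset_right).trans_lt hBt.lt_top).ne
    have hs := hsup u hu.isSub
    rw [h1, Real.one_rpow] at hs
    have hcont : Continuous fun x => u x ^ p := hu.cd.continuous.rpow_const (fun _ => Or.inr hp0.le)
    have hi1 : IntegrableOn (fun _ : E N => η₀ ^ p) B := integrableOn_const hBt
    have hi2 : IntegrableOn (S.indicator fun _ : E N => (2 : ℝ) ^ p) B :=
      IntegrableOn.indicator (integrableOn_const hBt) hSm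
    have hInt : ∫ x in B, u x ^ p ≤ η₀ ^ p * V + 2 ^ p * volume.real S := by
      calc _ ≤ ∫ x in B, (η₀ ^ p + S.indicator (fun _ => (2 : ℝ) ^ p) x) := by
            refine setIntegral_mono_on
              (hcont.continuousOn.integrableOn_compact (isCompact_closedBall _ _)) (hi1.add hi2) hBm
              fun x hx => ?_
            have hux := (hu.pos x).le
            by_cases hxS : x ∈ S
            · rw [indicator_of_mem hxS]
              have := Real.rpow_le_rpow hux (h2 x (by simpa [hB] using hx)) hp0.le
              have : 0 ≤ η₀ ^ p := by positivity
              linarith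
            · rw [indicator_of_notMem hxS, add_zero]
              apply Real.rpow_le_rpow hux _ hp0.le
              by_contra hcon
              exact hxS ⟨(not_le.mp hcon).le, hx⟩
        _ = _ := by
            rw [integral_add hi1 hi2, setIntegral_const, setIntegral_indicator hSm,
              setIntegral_const, inter_eq_right.mpr (inter_subset_right : S ⊆ B)]
            simp only [smul_eq_mul]; rw [← hV]; ring
    have hSθ : θ ≤ volume.real S := by
      refine (min_le_right _ _).trans ?_
      rw [div_le_iff₀ (by positivity)]
      have := hs.trans (mul_le_mul_of_nonneg_left hInt hD.le)
      have e : D * (η₀ ^ p * V) = 1 / 2 := by rw [hηp]; field_simp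
      rw [mul_add, e] at this
      linarith
    have hv := hu.affine 0 one_pos (inv_pos.mpr hη0)
    simp only [one_smul, zero_add] at hv
    have := hc _ hv ?_ x hx
    · rwa [← div_eq_inv_mul, le_div_iff₀ hη0, mul_comm] at this
    · have e : {x | 1 ≤ η₀⁻¹ * u x} = {x | η₀ ≤ u x} := by
        ext x; simp only [mem_ofPred_eq]
        rw [← div_eq_inv_mul, le_div_iff₀ hη0, one_mul]
      rw [e]
      exact ENNReal.ofReal_le_of_le_toReal hSθ

lemma scale_mem {x₀ x : E N} {r R : ℝ} (hr : 0 < r) (hx : ‖x - x₀‖ ≤ R * r) :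
    ∃ z : E N, ‖z‖ ≤ R ∧ x = x₀ + r • z := by
  refine ⟨r⁻¹ • (x - x₀), ?_, ?_⟩
  · rw [norm_smul, Real.norm_of_nonneg (by positivity), ← div_eq_inv_mul, div_le_iff₀ hr]; exact hx
  · rw [smul_inv_smul₀ hr.ne']; abel

lemma IsSol.expand {p : ℝ} (N : ℕ) (hp : 1 < p) (hN : p < N) :
    ∃ c η : ℝ, 0 < c ∧ c < 1 ∧ 0 < η ∧
    ∀ u : E N → ℝ, IsSol p u → ∀ (x₀ : E N) (r : ℝ), 0 < r →
      (∀ x, ‖x - x₀‖ ≤ r → u x ≤ 2 * u x₀) →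
      ∀ m : ℕ, ∀ x, ‖x - x₀‖ ≤ 2 ^ (m + 1) * r → c ^ m * (η * u x₀) ≤ u x := by
  obtain ⟨c, η, hc0, hc1, hη, hB, hA⟩ := IsSol.expand_unit N hp hN
  refine ⟨c, η, hc0, hc1, hη, fun u hu x₀ r hr h m => ?_⟩
  have hM := hu.pos x₀
  induction m with
  | zero =>
    intro x hx
    obtain ⟨z, hz, rfl⟩ := scale_mem hr hx
    have hv := hu.affine x₀ hr (inv_pos.mpr hM)
    have := hA _ hv (by simp [hM.ne']) (fun y hy => ?_) z (by simpa using hz)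
    · rw [← div_eq_inv_mul, le_div_iff₀ hM] at this
      simpa using this
    · rw [← div_eq_inv_mul, div_le_iff₀ hM]
      apply h
      rw [add_sub_cancel_left, norm_smul, Real.norm_of_nonneg hr.le]
      nlinarith
  | succ m ih =>
    intro x hx
    have hk : 0 < c ^ m * (η * u x₀) := by positivity
    have hr' : 0 < 2 ^ (m + 1) * r := by positivity
    obtain ⟨z, hz, rfl⟩ := scale_mem (R := 2) hr' (hx.trans_eq (by ring))
    have hv := hu.affine x₀ hr' (inv_pos.mpr hk)
    have := hB _ hv (fun y hy => ?_) z hz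
    · rw [← div_eq_inv_mul, le_div_iff₀ hk] at this
      rw [pow_succ']; linarith
    · rw [← div_eq_inv_mul, le_div_iff₀ hk, one_mul]
      apply ih
      rw [add_sub_cancel_left, norm_smul, Real.norm_of_nonneg hr'.le]
      nlinarith

/-- Harnack inequality on the whole space. -/
lemma IsSol.harnack {p : ℝ} (N : ℕ) (hp : 1 < p) (hN : p < N) :
    ∃ κ : ℝ, 0 < κ ∧ ∀ u : E N → ℝ, IsSol p u → ∀ z y, κ * u z ≤ u y := by
  obtain ⟨c, η, hc0, hc1, hη, hex⟩ := IsSol.expand N hp hN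
  set γ := -Real.logb 2 c with hγ
  have hγ0 : 0 < γ := by
    rw [hγ, neg_pos]; exact Real.logb_neg (by norm_num) hc0 hc1
  have hcγ : c = ((2 : ℝ) ^ γ)⁻¹ := by
    rw [← Real.rpow_neg (by norm_num), hγ, neg_neg, Real.rpow_logb (by norm_num) (by norm_num) hc0]
  set s : ℝ := (1 / 2) ^ γ⁻¹ with hs
  have hs0 : 0 < s := by positivity
  have hs1 : s < 1 := Real.rpow_lt_one (by norm_num) (by norm_num) (by positivity)
  have hsγ : s ^ γ = 1 / 2 := Real.rpow_inv_rpow (by norm_num) hγ0.ne'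
  set σ := 1 - s with hσ
  have hσ0 : 0 < σ := by linarith
  have hσ1 : σ < 1 := by linarith
  set κ := η * c * σ ^ γ with hκ
  have hκ0 : 0 < κ := by positivity
  refine ⟨min κ 1, by positivity, fun u hu z y => ?_⟩
  have huz := hu.pos z
  rcases eq_or_ne y z with rfl | hyz
  · exact mul_le_of_le_one_left huz.le (min_le_right _ _)
  refine (mul_le_mul_of_nonneg_right (min_le_left κ 1) huz.le).trans ?_
  set R := ‖y - z‖ with hR
  have hR0 : 0 < R := norm_pos_iff.mpr (sub_ne_zero.mpr hyz)
  have hfc : Continuous fun x => u x * (R - ‖x - z‖) ^ γ := by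
    refine hu.cd.continuous.mul (Continuous.rpow_const (by fun_prop) (fun _ => Or.inr hγ0.le))
  obtain ⟨x, hx, hmax⟩ := (isCompact_closedBall z R).exists_isMaxOn
    (nonempty_closedBall.mpr hR0.le) hfc.continuousOn
  have hmax' : ∀ x', ‖x' - z‖ ≤ R → u x' * (R - ‖x' - z‖) ^ γ ≤ u x * (R - ‖x - z‖) ^ γ :=
    fun x' hx' => hmax (by rwa [mem_closedBall_iff_norm])
  rw [mem_closedBall_iff_norm] at hx
  set d := R - ‖x - z‖ with hd
  have hux := hu.pos x
  have hz := hmax' z (by simp [hR0.le])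
  rw [sub_self, norm_zero, sub_zero] at hz
  have hd0 : 0 < d := by
    rcases (sub_nonneg.mpr hx).eq_or_lt with h | h
    · exfalso
      rw [hd, ← h, Real.zero_rpow hγ0.ne', mul_zero] at hz
      have : 0 < u z * R ^ γ := by positivity
      linarith
    · exact h
  have hdR : d ≤ R := by rw [hd]; linarith [norm_nonneg (x - z)]
  have hr0 : 0 < σ * d := by positivity
  have hloc : ∀ x', ‖x' - x‖ ≤ σ * d → u x' ≤ 2 * u x := by
    intro x' hx'
    have htri : ‖x' - z‖ ≤ ‖x' - x‖ + ‖x - z‖ := norm_sub_le_norm_sub_add_norm_sub _ _ _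
    have h1 : s * d ≤ R - ‖x' - z‖ := by
      have : σ * d = d - s * d := by rw [hσ]; ring
      linarith
    have hsd : 0 < s * d := by positivity
    have h2 := hmax' x' (by linarith)
    have h3 : (s * d) ^ γ ≤ (R - ‖x' - z‖) ^ γ := Real.rpow_le_rpow hsd.le h1 hγ0.le
    rw [Real.mul_rpow hs0.le hd0.le, hsγ] at h3
    have h4 := (mul_le_mul_of_nonneg_left h3 (hu.pos x').le).trans h2
    have hdγ : 0 < d ^ γ := by positivity
    have h5 : (u x' / 2) * d ^ γ ≤ u x * d ^ γ := by linarith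
    have := le_of_mul_le_mul_right h5 hdγ
    linarith
  have hq : 1 ≤ R / (σ * d) := by
    rw [le_div_iff₀ hr0]; nlinarith
  obtain ⟨n, hn1, hn2⟩ := exists_nat_pow_near hq (by norm_num : (1 : ℝ) < 2)
  have hy := hex u hu x (σ * d) hr0 hloc (n + 1) y (by
    rw [div_lt_iff₀ hr0] at hn2
    have htri : ‖y - x‖ ≤ ‖y - z‖ + ‖z - x‖ := norm_sub_le_norm_sub_add_norm_sub _ _ _
    rw [norm_sub_rev z x] at htri
    rw [pow_succ]; nlinarith)
  refine le_trans ?_ hy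
  have hcn : (σ * d / R) ^ γ ≤ c ^ n := by
    rw [hcγ, inv_pow, Real.rpow_pow_comm (by norm_num), ← Real.inv_rpow (by positivity)]
    apply Real.rpow_le_rpow (by positivity) _ hγ0.le
    rw [← inv_div]
    exact inv_anti₀ (by positivity) hn1
  rw [Real.div_rpow hr0.le hR0.le, Real.mul_rpow hσ0.le hd0.le] at hcn
  have hRγ : 0 < R ^ γ := by positivity
  have h6 : u z ≤ u x * d ^ γ / R ^ γ := by rw [le_div_iff₀ hRγ]; exact hz
  calc κ * u z ≤ κ * (u x * d ^ γ / R ^ γ) := by gcongr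
    _ = c * (σ ^ γ * d ^ γ / R ^ γ) * (η * u x) := by rw [hκ]; ring
    _ ≤ c * c ^ n * (η * u x) := by gcongr
    _ = _ := by rw [pow_succ']

lemma liouville_aux {p : ℝ} (hp : 1 < p) (hN : p < N) {u : E N → ℝ} (hu : ContDiff ℝ 1 u)
    (h0 : ∀ x, 0 ≤ u x)
    (hw : ∀ φ : E N → ℝ, ContDiff ℝ 1 φ → HasCompactSupport φ →
      ∫ x, ⟪pA p (gradient u x), gradient φ x⟫ = 0) (x : E N) : u x = ⨅ y, u y := by
  obtain ⟨κ, hκ, hH⟩ := IsSol.harnack N hp hN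
  have hbdd : BddBelow (range u) := ⟨0, by rintro _ ⟨y, rfl⟩; exact h0 y⟩
  have hle : ∀ y, ⨅ y, u y ≤ u y := fun y => ciInf_le hbdd y
  set I := ⨅ y, u y with hI
  apply le_antisymm _ (hle x)
  apply le_of_forall_pos_le_add
  intro ε hε
  set δ := κ * ε / 2 with hδ
  have hδ0 : 0 < δ := by positivity
  have hg : ∀ y, gradient (fun x => u x + (δ - I)) y = gradient u y := by
    intro y; simp only [gradient, fderiv_add_const]
  have hv : IsSol p (fun x => u x + (δ - I)) := by
    refine ⟨hu.add contDiff_const, fun y => by linarith [hle y], fun φ h1 h2 => ?_⟩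
    simp only [hg]; exact hw φ h1 h2
  obtain ⟨y, hy⟩ := exists_lt_of_ciInf_lt (show ⨅ y, u y < I + δ by rw [← hI]; linarith)
  have h := hH _ hv x y
  have : κ * (u x + (δ - I)) ≤ κ * ε := by linarith
  have := le_of_mul_le_mul_left this hκ
  linarith

end PLiouville

/-- **Lemma 3.1 (first part), Liouville theorem for p-harmonic functions.**
Let `1 < p < ∞` with `N > p`. Any nonnegative `C¹` weak solution of `Δ_p u = 0`
on all of `ℝ^N` is constant. -/
theorem liouville_p_harmonic
    (N : ℕ) (p : ℝ) (hp : 1 < p) (hNp : p < N)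
    (u : EuclideanSpace ℝ (Fin N) → ℝ) (hu : ContDiff ℝ 1 u)
    (hnonneg : ∀ x, 0 ≤ u x)
    (hweak : ∀ φ : EuclideanSpace ℝ (Fin N) → ℝ,
      ContDiff ℝ (⊤ : ℕ∞) φ → HasCompactSupport φ →
      ∫ x, ‖gradient u x‖ ^ (p - 2) * ⟪gradient u x, gradient φ x⟫ = 0) :
    ∀ x y, u x = u y := by
  intro x y
  have hw := PLiouville.weak_C1 (fun x => PLiouville.pA p (gradient u x))
    ((PLiouville.continuous_pA hp).comp (PLiouville.continuous_grad hu)) (fun φ h1 h2 => by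
      have := hweak φ h1 h2
      simpa only [PLiouville.pA, real_inner_smul_left] using this)
  rw [PLiouville.liouville_aux hp hNp hu hnonneg hw x,
    PLiouville.liouville_aux hp hNp hu hnonneg hw y]
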